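/- arXiv:2207.10976 — 2 statements merged into one kernel-verified Lean document; each statement's English description precedes it below -/
import Mathlib

section
/- Under the stated hypotheses on ψ, there exist t₀ > 0 and C > 1 such that for every t ∈ (0, t₀), the superlevel set {z ∈ D : G_D(z,z₀) ≥ −t} is contained in {z ∈ D : ψ(z) ≥ −Ct}. -/
open MeasureTheory Metric Complex Set Filter

noncomputable section

/-- `u` is harmonic on `s`: locally the real part of a holomorphic function. -/
def HarmonicOnD (u : ℂ → ℝ) (s : Set ℂ) : Prop :=
  ∀ z ∈ s, ∃ r > 0, Metric.ball z r ⊆ s ∧ ∃ f : ℂ → ℂ,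
    DifferentiableOn ℂ f (Metric.ball z r) ∧ ∀ w ∈ Metric.ball z r, u w = (f w).re

/-- Upper circle average of an `EReal`-valued function (via decreasing truncations). -/
noncomputable def circleAvgE (u : ℂ → EReal) (z : ℂ) (r : ℝ) : EReal :=
  ⨅ n : ℕ, ((((2 * Real.pi)⁻¹ *
      ∫ θ in (0:ℝ)..(2 * Real.pi),
        (max (u (circleMap z r θ)) ((-(n : ℝ) : ℝ) : EReal)).toReal) : ℝ) : EReal)

/-- `u` is subharmonic on the open set `s`. -/
def SubharmonicOnE (u : ℂ → EReal) (s : Set ℂ) : Prop :=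
  UpperSemicontinuousOn u s ∧ (∀ z ∈ s, u z ≠ ⊤) ∧ (∃ z ∈ s, u z ≠ ⊥) ∧
  ∀ z ∈ s, ∀ r : ℝ, 0 < r → Metric.closedBall z r ⊆ s → u z ≤ circleAvgE u z r

/-- The Lelong number `v(dd^c u, z₀)` of a subharmonic function. -/
noncomputable def lelongNumber (u : ℂ → EReal) (z₀ : ℂ) : ℝ :=
  sSup {a : ℝ | 0 ≤ a ∧ ∃ C : ℝ, ∃ r > 0, ∀ z : ℂ, z ≠ z₀ → dist z z₀ < r →
    u z ≤ ((a * Real.log (dist z z₀) + C : ℝ) : EReal)}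

/-- `G` is the (negative) Green function of `D` with pole at `z₀`. -/
structure IsGreenFunction (D : Set ℂ) (z₀ : ℂ) (G : ℂ → EReal) : Prop where
  neg : ∀ z ∈ D, G z < 0
  pole : G z₀ = ⊥
  logharm : ∃ h : ℂ → ℝ, HarmonicOnD h D ∧
    ∀ z ∈ D \ {z₀}, G z = ((Real.log (dist z z₀) + h z : ℝ) : EReal)
  bdry : ∀ w ∈ frontier D, Filter.Tendsto (fun z => (G z).toReal) (nhdsWithin w D) (nhds 0)

/-- `Γ` is an analytic Jordan curve. -/
def IsAnalyticJordanCurve (Γ : Set ℂ) : Prop :=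
  ∃ γ : ℝ → ℂ, AnalyticOnNhd ℝ γ Set.univ ∧ Function.Periodic γ (2 * Real.pi) ∧
    (∀ t, deriv γ t ≠ 0) ∧ Set.InjOn γ (Set.Ico 0 (2 * Real.pi)) ∧ Γ = Set.range γ

/-- `D` is a bounded planar regular region whose boundary consists of `n`
analytic Jordan curves. -/
def IsRegularRegion (n : ℕ) (D : Set ℂ) : Prop :=
  IsOpen D ∧ IsConnected D ∧ Bornology.IsBounded D ∧
  ∃ Γ : Fin n → Set ℂ, (∀ i, IsAnalyticJordanCurve (Γ i)) ∧
    (Pairwise fun i j => Disjoint (Γ i) (Γ j)) ∧ frontier D = ⋃ i, Γ i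

/-- `ν` is the outward unit normal vector field on `∂D`. -/
def IsOutwardUnitNormal (D : Set ℂ) (ν : ℂ → ℂ) : Prop :=
  ∀ z ∈ frontier D, ‖ν z‖ = 1 ∧
    (∀ᶠ t in nhdsWithin (0:ℝ) (Set.Ioi (0:ℝ)),
      z + t • ν z ∉ closure D ∧ z - t • ν z ∈ D) ∧
    (∀ γ : ℝ → ℂ, γ 0 = z → (∀ᶠ t in nhds (0:ℝ), γ t ∈ frontier D) →
      DifferentiableAt ℝ γ 0 → ((starRingEnd ℂ) (ν z) * deriv γ 0).re = 0)

/-- Arclength (1-dimensional Hausdorff) measure on the boundary of `D`. -/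
noncomputable def bdryArc (D : Set ℂ) : Measure ℂ :=
  (MeasureTheory.Measure.hausdorffMeasure 1).restrict (frontier D)

/-- The analytic Hardy class `H₂^(c)(D)`. -/
def HardyH2c (D : Set ℂ) (f : ℂ → ℂ) : Prop :=
  DifferentiableOn ℂ f D ∧ ∃ U : ℂ → ℝ, HarmonicOnD U D ∧ ∀ z ∈ D, ‖f z‖ ^ 2 ≤ U z

/-- Nontangential convergence of `f` to `L` at the boundary point `w`. -/
def NTTendsto (D : Set ℂ) (f : ℂ → ℂ) (w L : ℂ) : Prop :=
  ∀ α : ℝ, 1 < α →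
    Filter.Tendsto f
      (nhdsWithin w {z | z ∈ D ∧ dist z w ≤ α * Metric.infDist z (frontier D)}) (nhds L)

/-- `g` is the nontangential boundary value function of `f` (a.e. on `∂D`). -/
def IsNTBoundaryValue (D : Set ℂ) (f g : ℂ → ℂ) : Prop :=
  ∀ᵐ w ∂(bdryArc D), NTTendsto D f w (g w)

/-- `K` is the weighted Szegő kernel of `D` with boundary weight `lam`. -/
structure IsSzegoKernel (D : Set ℂ) (lam : ℂ → ℝ) (K : ℂ → ℂ → ℂ) : Prop where
  holo : ∀ w ∈ D, DifferentiableOn ℂ (fun z => K z w) D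
  cont : ∀ w ∈ D, ContinuousOn (fun z => K z w) (closure D)
  hardy : ∀ w ∈ D, HardyH2c D (fun z => K z w)
  hermitian : ∀ z ∈ D, ∀ w ∈ D, K z w = (starRingEnd ℂ) (K w z)
  sqfin : ∀ w ∈ D, (∫⁻ z, ENNReal.ofReal (‖K z w‖ ^ 2 * lam z) ∂(bdryArc D)) ≠ ⊤
  reproduce : ∀ f fb : ℂ → ℂ, HardyH2c D f → IsNTBoundaryValue D f fb → ∀ w ∈ D,
    f w = ((2 * Real.pi)⁻¹ : ℂ) * ∫ z, fb z * (starRingEnd ℂ) (K z w) * (lam z : ℂ) ∂(bdryArc D)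

/-- `B` is the weighted Bergman kernel of `D` with weight `ρ`. -/
structure IsBergmanKernel (D : Set ℂ) (ρ : ℂ → ℝ) (B : ℂ → ℂ → ℂ) : Prop where
  holo : ∀ w ∈ D, DifferentiableOn ℂ (fun z => B z w) D
  hermitian : ∀ z ∈ D, ∀ w ∈ D, B z w = (starRingEnd ℂ) (B w z)
  sqfin : ∀ w ∈ D, (∫⁻ z in D, ENNReal.ofReal (‖B z w‖ ^ 2 * ρ z)) ≠ ⊤
  reproduce : ∀ f : ℂ → ℂ, DifferentiableOn ℂ f D →
    IntegrableOn (fun z => ‖f z‖ ^ 2) D volume → ∀ w ∈ D,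
      f w = ∫ z in D, f z * (starRingEnd ℂ) (B z w) * (ρ z : ℂ)

/-- Extended-real logarithm (with `elog 0 = ⊥`). -/
noncomputable def elog (x : ℝ) : EReal := if x = 0 then ⊥ else ((Real.log x : ℝ) : EReal)

/-- `χ_{z₀}^m = χ_{-u}`: there is a holomorphic `F` on `D` with `log |F| = m·G + u`. -/
def charEqGreenPow (D : Set ℂ) (z₀ : ℂ) (G : ℂ → EReal) (u : ℂ → ℝ) (m : ℕ) : Prop :=
  ∃ F : ℂ → ℂ, DifferentiableOn ℂ F D ∧ ∀ z ∈ D \ {z₀},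
    F z ≠ 0 ∧ Real.log ‖F z‖ = m * (G z).toReal + u z

/-- `χ_{z₀} = χ_{-u}`. -/
def charEqGreen (D : Set ℂ) (z₀ : ℂ) (G : ℂ → EReal) (u : ℂ → ℝ) : Prop :=
  charEqGreenPow D z₀ G u 1

/-- The weight `ρ = e^{-φ} c(-2ψ)` (realized through `EReal.toReal`). -/
noncomputable def wgt2 (φ ψ : ℂ → EReal) (c : ℝ → ℝ) (z : ℂ) : ℝ :=
  Real.exp (-(φ z).toReal) * c ((-((2 : EReal) * ψ z)).toReal)

/-- The weight `e^{-φ} c(-ψ)` (realized through `EReal.toReal`). -/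
noncomputable def wgt1 (φ ψ : ℂ → EReal) (c : ℝ → ℝ) (z : ℂ) : ℝ :=
  Real.exp (-(φ z).toReal) * c ((-(ψ z)).toReal)

/-- Admissible gain function `c` on `[0,∞)`. -/
structure AdmissibleC (c : ℝ → ℝ) : Prop where
  meas : Measurable c
  pos : ∀ t : ℝ, 0 ≤ t → 0 < c t
  mono : ∀ s t : ℝ, 0 ≤ s → s ≤ t → c t * Real.exp (-t) ≤ c s * Real.exp (-s)
  limz : Filter.Tendsto c (nhdsWithin 0 (Set.Ioi 0)) (nhds 1)
  czero : c 0 = 1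
  fin : (∫⁻ t in Set.Ioi (0:ℝ), ENNReal.ofReal (c t * Real.exp (-t))) ≠ ⊤

/-- Admissible gain function `c` on `(0,∞)` (no normalization at `0`). -/
structure AdmissibleC' (c : ℝ → ℝ) : Prop where
  meas : Measurable c
  pos : ∀ t : ℝ, 0 < t → 0 < c t
  mono : ∀ s t : ℝ, 0 < s → s ≤ t → c t * Real.exp (-t) ≤ c s * Real.exp (-s)
  fin : (∫⁻ t in Set.Ioi (0:ℝ), ENNReal.ofReal (c t * Real.exp (-t))) ≠ ⊤

/-- `Z` is a discrete subset of `D`. -/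
def DiscreteIn (Z D : Set ℂ) : Prop :=
  Z ⊆ D ∧ ∀ z ∈ D, ∃ r > 0, Metric.ball z r ∩ Z ⊆ {z}

/-- `w` has a positive lower bound on every compact subset of `D ∖ Z`. -/
def PosLowerBoundOnCompacts (D Z : Set ℂ) (w : ℂ → ℝ) : Prop :=
  ∀ Kc : Set ℂ, Kc ⊆ D \ Z → IsCompact Kc → ∃ m : ℝ, 0 < m ∧ ∀ z ∈ Kc, m ≤ w z

/-- `∫₀^∞ c(t) e^{-t} dt`. -/
noncomputable def cInt (c : ℝ → ℝ) : ℝ := ∫ t in Set.Ioi (0:ℝ), c t * Real.exp (-t)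

/-- `h(t) = ∫_t^∞ c(s) e^{-s} ds`. -/
noncomputable def hFun (c : ℝ → ℝ) (t : ℝ) : ℝ := ∫ s in Set.Ioi t, c s * Real.exp (-s)

end

lemma curve_local (γ : ℝ → ℂ) (hγ : AnalyticOnNhd ℝ γ univ) (s : ℝ) (hd : deriv γ s ≠ 0) :
    ∃ ε > 0, ∃ K ≥ 0, ∀ t u : ℝ, |t - s| < ε → |u - s| < ε → ∀ n : ℂ, ‖n‖ = 1 →
      ((starRingEnd ℂ) n * deriv γ u).re = 0 →
      |((starRingEnd ℂ) n * (γ t - γ u)).re| ≤ K * ‖γ t - γ u‖ ^ 2 := by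
  have hC : ContDiffAt ℝ 1 (deriv γ) s := (hγ s (mem_univ _)).deriv.contDiffAt
  obtain ⟨M, V, hV, hL⟩ := hC.exists_lipschitzOnWith
  obtain ⟨ε0, hε0, hb⟩ := Metric.mem_nhds_iff.1 hV
  have hc : 0 < ‖deriv γ s‖ := norm_pos_iff.2 hd
  set c := ‖deriv γ s‖ with hcdef
  have hM : (0:ℝ) ≤ M := M.2
  refine ⟨min ε0 (c / (4 * (M + 1))), by positivity, 16 * M / c ^ 2, by positivity, ?_⟩
  intro t u ht hu n hn hperp
  obtain ⟨ht1, ht2⟩ := lt_min_iff.1 ht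
  obtain ⟨hu1, hu2⟩ := lt_min_iff.1 hu
  rw [lt_div_iff₀ (by positivity)] at ht2 hu2
  have hsV : s ∈ V := hb (mem_ball_self hε0)
  have memV : ∀ x ∈ ball s ε0, x ∈ V := fun x hx => hb hx
  have htb : t ∈ ball s ε0 := by rwa [mem_ball, Real.dist_eq]
  have hub : u ∈ ball s ε0 := by rwa [mem_ball, Real.dist_eq]
  have htu : |t - u| ≤ |t - s| + |u - s| := by
    have := abs_sub_le t s u
    rwa [abs_sub_comm s u] at this
  have key : ‖(γ t - (t:ℝ) • deriv γ u) - (γ u - (u:ℝ) • deriv γ u)‖ ≤ (M * |t - u|) * ‖t - u‖ := by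
    have hsub : uIcc u t ⊆ ball s ε0 := by
      rw [← segment_eq_uIcc]
      exact (convex_ball s ε0).segment_subset hub htb
    refine Convex.norm_image_sub_le_of_norm_hasDerivWithin_le (s := uIcc u t)
      (f := fun x : ℝ => γ x - x • deriv γ u) (f' := fun x => deriv γ x - deriv γ u) ?_ ?_
      (convex_uIcc u t) left_mem_uIcc right_mem_uIcc
    · intro x hx
      have h1 := (hγ x (mem_univ _)).differentiableAt.hasDerivAt
      have h2 := (hasDerivAt_id x).smul_const (deriv γ u)
      simpa [Pi.sub_def] using (h1.sub h2).hasDerivWithinAt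
    · intro x hx
      have := hL.dist_le_mul x (memV x (hsub hx)) u (memV u hub)
      rw [dist_eq_norm, Real.dist_eq] at this
      refine this.trans ?_
      exact mul_le_mul_of_nonneg_left (abs_sub_left_of_mem_uIcc hx) hM
  have e1 : (γ t - (t:ℝ) • deriv γ u) - (γ u - (u:ℝ) • deriv γ u) =
      (γ t - γ u) - ((t - u : ℝ) : ℂ) * deriv γ u := by
    simp only [real_smul]; push_cast; ring
  rw [e1, Real.norm_eq_abs] at key
  have hdu : c ≤ ‖deriv γ u‖ + M * |u - s| := by
    have := hL.dist_le_mul s hsV u (memV u hub)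
    rw [dist_eq_norm, Real.dist_eq, abs_sub_comm] at this
    have h3 := norm_sub_norm_le (deriv γ s) (deriv γ u)
    linarith
  have hlow : ‖deriv γ u‖ * |t - u| ≤ ‖γ t - γ u‖ + M * |t - u| * |t - u| := by
    have h4 := norm_sub_norm_le (((t - u : ℝ) : ℂ) * deriv γ u) (γ t - γ u)
    rw [norm_sub_rev (((t - u : ℝ) : ℂ) * deriv γ u)] at h4
    rw [norm_mul, Complex.norm_real, Real.norm_eq_abs] at h4
    linarith
  have ha := abs_nonneg (t - u)
  have hb1 := abs_nonneg (t - s)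
  have hb2 := abs_nonneg (u - s)
  have hlow2 : c / 4 * |t - u| ≤ ‖γ t - γ u‖ := by
    have h5 : c * |t - u| ≤ (‖deriv γ u‖ + M * |u - s|) * |t - u| :=
      mul_le_mul_of_nonneg_right hdu ha
    have h6 : M * |u - s| ≤ c / 4 := by nlinarith
    have h7 : M * |t - u| ≤ c / 2 := by nlinarith [mul_le_mul_of_nonneg_left htu hM]
    have h8 := mul_le_mul_of_nonneg_right h6 ha
    have h9 := mul_le_mul_of_nonneg_right h7 ha
    nlinarith
  have e2 : ((starRingEnd ℂ) n * (γ t - γ u)).re =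
      ((starRingEnd ℂ) n * ((γ t - γ u) - ((t - u : ℝ) : ℂ) * deriv γ u)).re := by
    have : (starRingEnd ℂ) n * ((γ t - γ u) - ((t - u : ℝ) : ℂ) * deriv γ u) =
      (starRingEnd ℂ) n * (γ t - γ u) - ((t - u : ℝ) : ℂ) * ((starRingEnd ℂ) n * deriv γ u) := by ring
    rw [this, Complex.sub_re, Complex.re_ofReal_mul, hperp]; simp
  rw [e2]
  refine (Complex.abs_re_le_norm _).trans ?_
  rw [norm_mul, RCLike.norm_conj, hn, one_mul]
  refine key.trans ?_
  have h10 : (c / 4 * |t - u|) ^ 2 ≤ ‖γ t - γ u‖ ^ 2 := by gcongr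
  calc (M:ℝ) * |t - u| * |t - u| = 16 * M / c ^ 2 * (c / 4 * |t - u|) ^ 2 := by field_simp; ring
    _ ≤ _ := by gcongr

/-- Every point of an analytic Jordan curve is covered by a parametrization. -/
lemma frontier_curve {n : ℕ} {D : Set ℂ} (hD : IsRegularRegion n D) {q : ℂ}
    (hq : q ∈ frontier D) : ∃ γ : ℝ → ℂ, ∃ s : ℝ, AnalyticOnNhd ℝ γ univ ∧ γ s = q ∧
      (∀ t, γ t ∈ frontier D) ∧ (∀ t, deriv γ t ≠ 0) ∧
      ∀ ε > 0, ∃ d > 0, ∀ p ∈ frontier D, ‖p - q‖ < d → ∃ t, |t - s| < ε ∧ γ t = p := by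
  obtain ⟨-, -, -, Γ, hΓ, hdisj, hfr⟩ := hD
  have hq' := hq
  rw [hfr, mem_iUnion] at hq'
  obtain ⟨i, hi⟩ := hq'
  obtain ⟨γ, han, hper, hne, hinj, hrange⟩ := hΓ i
  have hpi := Real.two_pi_pos
  have hcl : ∀ j, IsCompact (Γ j) := by
    intro j
    obtain ⟨γj, hanj, hperj, -, -, hrj⟩ := hΓ j
    have hcj : Continuous γj := continuous_iff_continuousAt.2 fun x => (hanj x (mem_univ _)).continuousAt
    rw [hrj, ← hperj.image_Icc hpi 0]
    exact isCompact_Icc.image hcj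
  have hc : Continuous γ := continuous_iff_continuousAt.2 fun x => (han x (mem_univ _)).continuousAt
  have hi' := hi
  rw [hrange] at hi'
  obtain ⟨s0, hs0⟩ := hi'
  obtain ⟨s, hs, hss⟩ := hper.exists_mem_Ico hpi s0 0
  rw [zero_add] at hs
  have hsq : γ s = q := hss.symm.trans hs0
  refine ⟨γ, s, han, hsq, ?_, hne, ?_⟩
  · intro t; rw [hfr, mem_iUnion]; exact ⟨i, by rw [hrange]; exact mem_range_self t⟩
  intro ε hε
  -- the closed bad set
  set B : Set ℂ := (⋃ j ∈ {j | j ≠ i}, Γ j) ∪ γ '' Icc (s + ε) (s + 2 * Real.pi - ε) with hB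
  have hBc : IsClosed B := by
    refine IsClosed.union ?_ (isCompact_Icc.image hc).isClosed
    exact (Set.toFinite _).isClosed_biUnion fun j _ => (hcl j).isClosed
  have hqB : q ∉ B := by
    rintro (h | ⟨t, ht, htq⟩)
    · simp only [mem_iUnion] at h
      obtain ⟨j, hj, hjq⟩ := h
      exact Set.disjoint_left.1 (hdisj hj) hjq hi
    · have htI : t ∈ Ioo s (s + 2 * Real.pi) := ⟨by linarith [ht.1], by linarith [ht.2]⟩
      by_cases h2 : t < 2 * Real.pi
      · have := hinj ⟨by linarith [hs.1, htI.1], h2⟩ hs (htq.trans hsq.symm)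
        linarith [htI.1]
      · have h3 : γ (t - 2 * Real.pi) = γ s := by rw [hper.sub_eq, htq, hsq]
        have := hinj ⟨by linarith, by linarith [htI.2, hs.2]⟩ hs h3
        linarith [htI.2]
  obtain ⟨d, hd, hdb⟩ := Metric.mem_nhds_iff.1 (hBc.isOpen_compl.mem_nhds hqB)
  refine ⟨d, hd, fun p hp hpd => ?_⟩
  have hpB : p ∉ B := hdb (by rwa [mem_ball, dist_eq_norm])
  rw [hfr, mem_iUnion] at hp
  obtain ⟨j, hj⟩ := hp
  have hji : j = i := by
    by_contra h
    exact hpB (Or.inl (by simp only [mem_iUnion]; exact ⟨j, h, hj⟩))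
  subst hji
  rw [hrange] at hj
  obtain ⟨t0, ht0⟩ := hj
  obtain ⟨t, ht, htt⟩ := hper.exists_mem_Ico hpi t0 s
  have htp : γ t = p := htt.symm.trans ht0
  by_cases h1 : t < s + ε
  · exact ⟨t, by rw [abs_lt]; constructor <;> linarith [ht.1], htp⟩
  · by_cases h2 : t ≤ s + 2 * Real.pi - ε
    · exact absurd (Or.inr ⟨t, ⟨not_lt.1 h1, h2⟩, htp⟩) hpB
    · exact ⟨t - 2 * Real.pi, by rw [abs_lt]; constructor <;> linarith [ht.2], by
        rw [hper.sub_eq, htp]⟩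

lemma normal_perp {D : Set ℂ} {ν : ℂ → ℂ} (hν : IsOutwardUnitNormal D ν) {γ : ℝ → ℂ}
    (han : AnalyticOnNhd ℝ γ univ) (hfr : ∀ t, γ t ∈ frontier D) (u : ℝ) :
    ((starRingEnd ℂ) (ν (γ u)) * deriv γ u).re = 0 := by
  have h := (hν (γ u) (hfr u)).2.2 (fun t => γ (u + t)) (by simp)
    (Eventually.of_forall fun t => hfr _) ?_
  · rwa [deriv_comp_const_add, add_zero] at h
  · have : DifferentiableAt ℝ γ (u + 0) := (han _ (mem_univ _)).differentiableAt
    exact this.comp 0 ((differentiableAt_const u).add differentiableAt_id)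

lemma quad_bound {n : ℕ} {D : Set ℂ} (hD : IsRegularRegion n D) {ν : ℂ → ℂ}
    (hν : IsOutwardUnitNormal D ν) : ∃ K > 0, ∀ q ∈ frontier D, ∀ p ∈ frontier D,
      |((starRingEnd ℂ) (ν q) * (p - q)).re| ≤ K * ‖p - q‖ ^ 2 := by
  have hcomp : IsCompact (frontier D) := 
    Metric.isCompact_of_isClosed_isBounded isClosed_frontier
      (hD.2.2.1.closure.subset frontier_subset_closure)
  have main : ∃ K ≥ 0, ∃ d > 0, ∀ q ∈ frontier D, q ∈ frontier D → ∀ p ∈ frontier D, ‖p - q‖ < d →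
      |((starRingEnd ℂ) (ν q) * (p - q)).re| ≤ K * ‖p - q‖ ^ 2 := by
    refine hcomp.induction_on (p := fun S => ∃ K ≥ 0, ∃ d > 0, ∀ q ∈ S, q ∈ frontier D →
      ∀ p ∈ frontier D, ‖p - q‖ < d →
      |((starRingEnd ℂ) (ν q) * (p - q)).re| ≤ K * ‖p - q‖ ^ 2) ?_ ?_ ?_ ?_
    · exact ⟨0, le_rfl, 1, one_pos, by simp⟩
    · rintro S T hST ⟨K, hK, d, hd, h⟩
      exact ⟨K, hK, d, hd, fun q hq => h q (hST hq)⟩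
    · rintro S T ⟨K, hK, d, hd, h⟩ ⟨K', hK', d', hd', h'⟩
      refine ⟨max K K', le_max_of_le_left hK, min d d', lt_min hd hd', ?_⟩
      rintro q (hq | hq) hqf p hp hpq
      · refine (h q hq hqf p hp (lt_of_lt_of_le hpq (min_le_left _ _))).trans ?_
        gcongr; exact le_max_left _ _
      · refine (h' q hq hqf p hp (lt_of_lt_of_le hpq (min_le_right _ _))).trans ?_
        gcongr; exact le_max_right _ _
    · intro x hx
      obtain ⟨γ, s, han, hs, hfr, hne, hloc⟩ := frontier_curve hD hx
      obtain ⟨ε, hε, K, hK, hq⟩ := curve_local γ han s (hne s)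
      obtain ⟨d, hd, hdl⟩ := hloc ε hε
      refine ⟨ball x (d/2), mem_nhdsWithin_of_mem_nhds (ball_mem_nhds x (by positivity)), K, hK,
        d/2, by positivity, ?_⟩
      intro q hqb hqf p hpf hpq
      rw [mem_ball, dist_eq_norm] at hqb
      obtain ⟨u, hu, huq⟩ := hdl q hqf (by linarith)
      obtain ⟨t, ht, htp⟩ := hdl p hpf (by
        have := norm_sub_le_norm_sub_add_norm_sub p q x; linarith)
      subst huq htp
      exact hq t u ht hu _ (hν _ hqf).1 (normal_perp hν han hfr u)
  obtain ⟨K, hK, d, hd, h⟩ := main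
  refine ⟨max K (1/d), lt_max_of_lt_right (by positivity), fun q hq p hp => ?_⟩
  by_cases hpq : ‖p - q‖ < d
  · refine (h q hq hq p hp hpq).trans ?_
    gcongr; exact le_max_left _ _
  · refine (Complex.abs_re_le_norm _).trans ?_
    rw [norm_mul, RCLike.norm_conj, (hν q hq).1, one_mul]
    calc ‖p - q‖ = 1 / d * (d * ‖p - q‖) := by field_simp
      _ ≤ 1 / d * (‖p - q‖ * ‖p - q‖) := by gcongr; exact not_lt.1 hpq
      _ = 1 / d * ‖p - q‖ ^ 2 := by ring
      _ ≤ _ := by gcongr; exact le_max_right _ _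

lemma ball_subset_of_disjoint {D : Set ℂ} (hD : IsOpen D) {x y : ℂ} {r : ℝ}
    (hdis : ∀ p ∈ frontier D, p ∉ ball x r) (hy : y ∈ ball x r) (hyD : y ∈ D) :
    ball x r ⊆ D := by
  intro w hw
  by_contra hwD
  have hmem : ∀ p ∈ ball x r, p ∉ D → p ∈ (closure D)ᶜ := by
    intro p hp hpD hpc
    exact hdis p (by rw [hD.frontier_eq]; exact ⟨hpc, hpD⟩) hp
  obtain ⟨p, -, hp1, hp2⟩ := (convex_ball x r).isPreconnected D (closure D)ᶜ hD
    isClosed_closure.isOpen_compl (fun p hp => by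
      by_cases h : p ∈ D
      · exact Or.inl h
      · exact Or.inr (hmem p hp h)) ⟨y, hy, hyD⟩ ⟨w, hw, hmem w hw hwD⟩
  exact hp2 (subset_closure hp1)

lemma HarmonicOnD.harmonicAt {u : ℂ → ℝ} {s : Set ℂ} (h : HarmonicOnD u s) {z : ℂ} (hz : z ∈ s) :
    InnerProductSpace.HarmonicAt u z := by
  obtain ⟨r, hr, -, f, hf, hu⟩ := h z hz
  have hA : AnalyticAt ℂ f z := hf.analyticAt (ball_mem_nhds z hr)
  refine (InnerProductSpace.harmonicAt_congr_nhds ?_).2 hA.harmonicAt_re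
  filter_upwards [ball_mem_nhds z hr] with w hw using hu w hw

lemma harmonic_localMax {v : ℂ → ℝ} {w : ℂ} (hv : InnerProductSpace.HarmonicAt v w)
    (hmax : IsLocalMax v w) : ∀ᶠ x in nhds w, v x = v w := by
  obtain ⟨ε, hε, hb⟩ := Metric.isOpen_iff.1
    (InnerProductSpace.isOpen_setOfPred_harmonicAt (f := v)) w hv
  obtain ⟨F, hF, hFv⟩ := InnerProductSpace.HarmonicOnNhd.exists_analyticOnNhd_ball_re_eq
    (fun _ hy ↦ hb hy)
  have hnorm : ∀ x ∈ ball w ε, ‖Complex.exp (F x)‖ = Real.exp (v x) := by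
    intro x hx
    rw [Complex.norm_exp]; congr 1; exact hFv hx
  have hball := ball_mem_nhds w hε
  have h1 := Complex.norm_eventually_eq_of_isLocalMax (f := fun x => Complex.exp (F x)) (c := w) (by
    filter_upwards [hball] with x hx using (hF x hx).differentiableAt.cexp) (by
    filter_upwards [hball, hmax] with x hx hle
    simp only [Function.comp_apply]
    rw [hnorm x hx, hnorm w (mem_ball_self hε)]
    exact Real.exp_le_exp.2 hle)
  filter_upwards [h1, hball] with x hx hxb
  rw [hnorm x hxb, hnorm w (mem_ball_self hε)] at hx
  exact Real.exp_injective hx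

lemma annulus_max {v : ℂ → ℝ} {a : ℂ} {r₁ r₂ : ℝ} (hr₁ : 0 < r₁)
    (hcont : ContinuousOn v {w | r₁ ≤ dist w a ∧ dist w a ≤ r₂})
    (hharm : ∀ w, r₁ < dist w a → dist w a < r₂ → InnerProductSpace.HarmonicAt v w)
    (hin : ∀ w, dist w a = r₁ → v w ≤ 0) (hout : ∀ w, dist w a = r₂ → v w ≤ 0)
    {z : ℂ} (hz₁ : r₁ ≤ dist z a) (hz₂ : dist z a ≤ r₂) : v z ≤ 0 := by
  set A : Set ℂ := {w | r₁ ≤ dist w a ∧ dist w a ≤ r₂} with hA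
  have hdc : Continuous fun w : ℂ => dist w a := continuous_id.dist continuous_const
  have hAc : IsCompact A := by
    refine Metric.isCompact_of_isClosed_isBounded ?_
      (isBounded_closedBall (x := a) (r := r₂) |>.subset fun w hw => hw.2)
    exact (isClosed_le continuous_const hdc).inter (isClosed_le hdc continuous_const)
  obtain ⟨w₀, hw₀, hmax⟩ := hAc.exists_isMaxOn ⟨z, hz₁, hz₂⟩ hcont
  have hBc : IsCompact (A ∩ v ⁻¹' {v w₀}) :=
    hAc.of_isClosed_subset (hcont.preimage_isClosed_of_isClosed hAc.isClosed isClosed_singleton)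
      inter_subset_left
  obtain ⟨w, ⟨hwA, hwv⟩, hwmax⟩ := hBc.exists_isMaxOn ⟨w₀, hw₀, rfl⟩ hdc.continuousOn
  have hwv : v w = v w₀ := hwv
  refine (hmax ⟨hz₁, hz₂⟩ : v z ≤ v w₀).trans ?_
  rw [← hwv]
  rcases hwA.1.eq_or_lt with h | h1
  · exact hin w h.symm
  rcases hwA.2.eq_or_lt with h | h2
  · exact hout w h
  exfalso
  have hnA : ∀ᶠ x in nhds w, x ∈ A := by
    have o1 := (isOpen_lt continuous_const hdc).mem_nhds (show r₁ < dist w a from h1)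
    have o2 := (isOpen_lt hdc continuous_const).mem_nhds (show dist w a < r₂ from h2)
    filter_upwards [o1, o2] with x hx1 hx2 using ⟨le_of_lt hx1, le_of_lt hx2⟩
  have hloc : IsLocalMax v w := by
    filter_upwards [hnA] with x hx
    rw [hwv]; exact hmax hx
  have hconst := harmonic_localMax (hharm w h1 h2) hloc
  have htend : Tendsto (fun t : ℝ => w + (t : ℂ) * (w - a)) (nhdsWithin 0 (Ioi 0)) (nhds w) := by
    have : Continuous fun t : ℝ => w + (t : ℂ) * (w - a) := by fun_prop
    have h := this.tendsto 0
    simp only [Complex.ofReal_zero, zero_mul, add_zero] at h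
    exact h.mono_left nhdsWithin_le_nhds
  obtain ⟨t, ⟨htA, htv⟩, ht⟩ := ((htend.eventually (hnA.and hconst)).and self_mem_nhdsWithin).exists
  have ht : 0 < t := ht
  have := hwmax ⟨htA, show v _ = v w₀ from htv.trans hwv⟩
  have this : dist (w + (t : ℂ) * (w - a)) a ≤ dist w a := this
  rw [dist_eq_norm, dist_eq_norm, show w + (t : ℂ) * (w - a) - a = ((1 + t : ℝ) : ℂ) * (w - a) by
    push_cast; ring, norm_mul, Complex.norm_real, Real.norm_eq_abs, abs_of_pos (by linarith)] at this
  rw [dist_eq_norm] at h1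
  nlinarith

lemma hopf {D : Set ℂ} {z₀ a : ℂ} {h : ℂ → ℝ} {r m : ℝ} (hh : HarmonicOnD h D) (hr : 0 < r)
    (hm : 0 < m) (hball : ball a r ⊆ D) (hz₀ : z₀ ∉ ball a r)
    (hneg : ∀ w ∈ ball a r, Real.log (dist w z₀) + h w ≤ 0)
    (hin : ∀ w, dist w a = r / 2 → Real.log (dist w z₀) + h w ≤ -m)
    {z : ℂ} (hz₁ : r / 2 ≤ dist z a) (hz₂ : dist z a < r) :
    Real.log (dist z z₀) + h z ≤ -(m / Real.log 2 * ((r - dist z a) / (2 * r))) := by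
  set κ := m / Real.log 2 with hκ
  have hl2 : 0 < Real.log 2 := Real.log_pos (by norm_num)
  have hκ0 : 0 < κ := by positivity
  set δ := r - dist z a with hδ
  have hδ0 : 0 < δ := by rw [hδ]; linarith
  set r' := r - δ / 2 with hr'
  have hr'0 : r / 2 < r' := by rw [hr', hδ]; linarith
  have hr'r : r' < r := by rw [hr']; linarith
  have hH : ∀ w, r / 2 ≤ dist w a → dist w a ≤ r' → InnerProductSpace.HarmonicAt
      (fun w => (Real.log ‖w - z₀‖ + h w) - (κ • (fun w => Real.log ‖w - a‖)) w + κ * Real.log r') w := by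
    intro w hw1 hw2
    have hwb : w ∈ ball a r := by rw [mem_ball]; linarith
    have h1 : InnerProductSpace.HarmonicAt (fun w => Real.log ‖w - z₀‖) w :=
      AnalyticAt.harmonicAt_log_norm (by fun_prop) (by
        rw [sub_ne_zero]; rintro rfl; exact hz₀ hwb)
    have h2 : InnerProductSpace.HarmonicAt (fun w => Real.log ‖w - a‖) w :=
      AnalyticAt.harmonicAt_log_norm (by fun_prop) (by
        rw [sub_ne_zero]; rintro rfl; rw [dist_self] at hw1; linarith)
    have h3 : InnerProductSpace.HarmonicAt (fun _ : ℂ => κ * Real.log r') w :=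
      InnerProductSpace.harmonicAt_const _
    exact ((h1.add (hh.harmonicAt (hball hwb))).sub h2.const_smul).add h3
  have := annulus_max (z := z) (by linarith : 0 < r / 2)
    (fun w hw => (hH w hw.1 hw.2).1.continuousAt.continuousWithinAt)
    (fun w h1 h2 => hH w h1.le h2.le) ?_ ?_ hz₁ (by rw [hr', hδ]; linarith)
  · simp only [Pi.smul_apply, smul_eq_mul, ← dist_eq_norm] at this
    have hlog : Real.log (dist z a) - Real.log r' ≤ -(δ / (2 * r)) := by
      have hr'p : 0 < r' := by linarith
      rw [← Real.log_div (by linarith) hr'p.ne']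
      have h1 := Real.log_le_sub_one_of_pos (show 0 < dist z a / r' by
        apply div_pos <;> linarith)
      refine h1.trans ?_
      have e : dist z a / r' - 1 = -((δ / 2) / r') := by
        rw [eq_neg_iff_add_eq_zero]; field_simp; rw [hr', hδ]; ring
      rw [e, neg_le_neg_iff, div_div]
      gcongr
    have := mul_le_mul_of_nonneg_left hlog hκ0.le
    linarith
  · intro w hw
    simp only [Pi.smul_apply, smul_eq_mul, ← dist_eq_norm]
    have h1 := hin w hw
    rw [hw]
    have h2 : Real.log r' ≤ Real.log 2 + Real.log (r / 2) := by
      rw [← Real.log_mul (by norm_num) (by linarith)]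
      apply Real.log_le_log <;> linarith
    have h3 := mul_le_mul_of_nonneg_left h2 hκ0.le
    have h4 : κ * Real.log 2 = m := by rw [hκ]; field_simp
    rw [mul_add, h4] at h3
    linarith
  · intro w hw
    simp only [Pi.smul_apply, smul_eq_mul, ← dist_eq_norm]
    rw [hw]
    have := hneg w (by rw [mem_ball]; linarith)
    linarith

lemma psi_lip {D U : Set ℂ} (hcomp : IsCompact (frontier D)) (hU : IsOpen U)
    (hUbd : frontier D ⊆ U) {f : ℂ → ℝ} (hf : ContDiffOn ℝ 1 f U) :
    ∃ L ≥ 0, ∃ d > 0, ∀ q ∈ frontier D, ∀ z, dist z q < d →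
      z ∈ U ∧ |f z - f q| ≤ L * dist z q := by
  refine hcomp.induction_on (p := fun S => ∃ L ≥ 0, ∃ d > 0, ∀ q ∈ S, ∀ z, dist z q < d →
      z ∈ U ∧ |f z - f q| ≤ L * dist z q) ?_ ?_ ?_ ?_
  · exact ⟨0, le_rfl, 1, one_pos, by simp⟩
  · rintro S T hST ⟨K, hK, d, hd, h⟩
    exact ⟨K, hK, d, hd, fun q hq => h q (hST hq)⟩
  · rintro S T ⟨K, hK, d, hd, h⟩ ⟨K', hK', d', hd', h'⟩
    refine ⟨max K K', le_max_of_le_left hK, min d d', lt_min hd hd', ?_⟩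
    rintro q (hq | hq) z hz
    · obtain ⟨h1, h2⟩ := h q hq z (lt_of_lt_of_le hz (min_le_left _ _))
      refine ⟨h1, h2.trans ?_⟩
      gcongr; exact le_max_left _ _
    · obtain ⟨h1, h2⟩ := h' q hq z (lt_of_lt_of_le hz (min_le_right _ _))
      refine ⟨h1, h2.trans ?_⟩
      gcongr; exact le_max_right _ _
  · intro x hx
    have hxU := hU.mem_nhds (hUbd hx)
    obtain ⟨L, V, hV, hL⟩ := (hf.contDiffAt hxU).exists_lipschitzOnWith
    obtain ⟨d, hd, hdb⟩ := Metric.mem_nhds_iff.1 (inter_mem hV hxU)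
    refine ⟨ball x (d/2), mem_nhdsWithin_of_mem_nhds (ball_mem_nhds x (by positivity)), L, L.2,
      d/2, by positivity, ?_⟩
    intro q hq z hz
    rw [mem_ball] at hq
    have hq' := hdb (show q ∈ ball x d by rw [mem_ball]; linarith)
    have hz' := hdb (show z ∈ ball x d by
      rw [mem_ball]; have := dist_triangle z q x; linarith)
    refine ⟨hz'.2, ?_⟩
    rw [← Real.dist_eq]
    exact hL.dist_le_mul z hz'.1 q hq'.1

/-- Interior points at nearest boundary point `q` lie on the inner normal through `q`. -/
lemma nearest_normal {n : ℕ} {D : Set ℂ} (hD : IsRegularRegion n D) {ν : ℂ → ℂ}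
    (hν : IsOutwardUnitNormal D ν) {z q : ℂ} (hz : z ∈ D) (hq : q ∈ frontier D)
    (hmin : infDist z (frontier D) = dist z q) :
    z = q - ((dist z q : ℝ) : ℂ) * ν q := by
  obtain ⟨γ, s, han, hs, hfr, hne, -⟩ := frontier_curve hD hq
  have hle : ∀ p ∈ frontier D, dist z q ≤ dist z p := fun p hp => hmin ▸ infDist_le_dist_of_mem hp
  have hzq : z ≠ q := by
    rintro rfl
    rw [hD.1.frontier_eq] at hq
    exact hq.2 hz
  have hpos : 0 < dist z q := dist_pos.2 hzq
  have hperp := normal_perp hν han hfr s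
  obtain ⟨hn1, hn2, -⟩ := hν q hq
  rw [hs] at hperp
  -- orthogonality
  have horth : inner ℝ (γ s - z) (deriv γ s) = 0 := by
    have hder : HasDerivAt (fun t => ‖γ t - z‖ ^ 2) (2 * inner ℝ (γ s - z) (deriv γ s)) s :=
      ((han s (mem_univ _)).differentiableAt.hasDerivAt.sub_const z).norm_sq
    have hlm : IsLocalMin (fun t => ‖γ t - z‖ ^ 2) s := by
      refine Eventually.of_forall fun t => ?_
      have := hle (γ t) (hfr t)
      rw [← hs, dist_comm, dist_comm z, dist_eq_norm, dist_eq_norm] at this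
      simp only
      gcongr
    have := hlm.hasDerivAt_eq_zero hder
    linarith
  rw [hs] at horth
  have hcoll : ∃ c : ℝ, z - q = (c : ℂ) * ν q := by
    have hd := hne s
    set w := deriv γ s
    refine ⟨((starRingEnd ℂ) (ν q) * (z - q)).re, ?_⟩
    rw [Complex.inner] at horth
    have hnsq : (ν q).re ^ 2 + (ν q).im ^ 2 = 1 := by
      have := Complex.sq_norm (ν q)
      rw [hn1, Complex.normSq_apply] at this; nlinarith
    have hwne : w.re ^ 2 + w.im ^ 2 ≠ 0 := by
      intro h
      apply hd
      apply Complex.ext <;> simp only [Complex.zero_re, Complex.zero_im] <;> nlinarith [sq_nonneg w.re, sq_nonneg w.im]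
    have hcross : (ν q).re * (z - q).im - (ν q).im * (z - q).re = 0 := by
      simp only [Complex.mul_re, Complex.conj_re, Complex.conj_im, Complex.sub_re, Complex.sub_im] at horth hperp ⊢
      have h1 : (w.re ^ 2 + w.im ^ 2) * ((ν q).re * (z.im - q.im) - (ν q).im * (z.re - q.re)) = 0 := by
        linear_combination (-(w.re * (z.im - q.im)) + w.im * (z.re - q.re)) * (-hperp) + (w.re * (ν q).im - w.im * (ν q).re) * horth
      exact (mul_eq_zero.1 h1).resolve_left hwne
    apply Complex.ext
    · simp only [Complex.mul_re, Complex.conj_re, Complex.conj_im, Complex.ofReal_re, Complex.ofReal_im]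
      linear_combination (-(z - q).re) * hnsq - (ν q).im * hcross
    · simp only [Complex.mul_im, Complex.mul_re, Complex.conj_re, Complex.conj_im, Complex.ofReal_re, Complex.ofReal_im]
      linear_combination (-(z - q).im) * hnsq + (ν q).re * hcross
  obtain ⟨c, hc⟩ := hcoll
  have hcabs : |c| = dist z q := by
    rw [dist_eq_norm, hc, norm_mul, hn1, Complex.norm_real, Real.norm_eq_abs, mul_one]
  rcases abs_choice c with h | h
  · exfalso
    rw [h] at hcabs
    have hsub : ball z (dist z q) ⊆ D := ball_subset_of_disjoint hD.1 (fun p hp hpb => by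
      rw [mem_ball, dist_comm] at hpb
      exact absurd (hle p hp) (not_le.2 hpb)) (mem_ball_self hpos) hz
    have hev : ∀ᶠ t in nhdsWithin (0:ℝ) (Ioi 0), t < c :=
      mem_nhdsWithin_of_mem_nhds (Iio_mem_nhds (by linarith))
    obtain ⟨t, ⟨⟨ht1, -⟩, ht2⟩, ht3⟩ := ((hn2.and hev).and self_mem_nhdsWithin).exists
    have ht3 : 0 < t := ht3
    apply ht1
    apply subset_closure
    apply hsub
    rw [mem_ball, dist_eq_norm, ← hcabs]
    have : q + t • ν q - z = ((t - c : ℝ) : ℂ) * ν q := by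
      rw [Complex.real_smul]; push_cast; linear_combination -hc
    rw [this, norm_mul, hn1, Complex.norm_real, Real.norm_eq_abs, mul_one, abs_lt]
    constructor <;> linarith
  · rw [← hcabs, h]
    push_cast
    linear_combination hc

/-- Uniform interior ball condition. -/
lemma interior_ball {D : Set ℂ} (hD : IsOpen D) {ν : ℂ → ℂ}
    (hν : IsOutwardUnitNormal D ν) {K r : ℝ} (hr : 0 < r) (hKr : 2 * r * K ≤ 1)
    (hK : ∀ q ∈ frontier D, ∀ p ∈ frontier D,
      |((starRingEnd ℂ) (ν q) * (p - q)).re| ≤ K * ‖p - q‖ ^ 2)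
    {q : ℂ} (hq : q ∈ frontier D) : ball (q - (r : ℂ) * ν q) r ⊆ D := by
  obtain ⟨hn1, hn2, -⟩ := hν q hq
  have hev : ∀ᶠ t in nhdsWithin (0:ℝ) (Ioi 0), t < r :=
      mem_nhdsWithin_of_mem_nhds (Iio_mem_nhds hr)
  obtain ⟨t, ⟨⟨-, ht1⟩, ht2⟩, ht3⟩ := ((hn2.and hev).and self_mem_nhdsWithin).exists
  have ht3 : 0 < t := ht3
  refine ball_subset_of_disjoint hD ?_ ?_ ht1
  · intro p hp hpb
    rw [mem_ball, dist_eq_norm] at hpb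
    have h1 := hK q hq p hp
    have h2 : ‖p - (q - (r:ℂ) * ν q)‖ ^ 2 =
        ‖p - q‖ ^ 2 + 2 * r * ((starRingEnd ℂ) (ν q) * (p - q)).re + r ^ 2 := by
      have h3 : (ν q).re * (ν q).re + (ν q).im * (ν q).im = 1 := by
        have := Complex.sq_norm (ν q)
        rw [hn1, Complex.normSq_apply] at this; linarith
      rw [Complex.sq_norm, Complex.sq_norm, Complex.normSq_apply, Complex.normSq_apply]
      simp only [Complex.mul_re, Complex.mul_im, Complex.conj_re, Complex.conj_im, Complex.sub_re,
        Complex.sub_im, Complex.ofReal_re, Complex.ofReal_im]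
      linear_combination r ^ 2 * h3
    have h4 : ‖p - (q - (r:ℂ) * ν q)‖ ^ 2 < r ^ 2 := by gcongr
    have h5 := (abs_le.1 h1).1
    have h6 := mul_le_mul_of_nonneg_left h5 (by linarith : 0 ≤ 2 * r)
    have h7 := mul_le_mul_of_nonneg_right hKr (sq_nonneg ‖p - q‖)
    linarith
  · rw [mem_ball, dist_eq_norm, Complex.real_smul,
      show q - (t:ℂ) * ν q - (q - (r:ℂ) * ν q) = ((r - t : ℝ) : ℂ) * ν q by push_cast; ring,
      norm_mul, hn1, Complex.norm_real, Real.norm_eq_abs, mul_one, abs_lt]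
    constructor <;> linarith

/-- The Green function is bounded away from `0` at distance `≥ ρ` from the boundary. -/
lemma green_interior {D : Set ℂ} (hD : IsOpen D) (hbd : Bornology.IsBounded D)
    {z₀ : ℂ} {h : ℂ → ℝ} (hh : HarmonicOnD h D)
    (hneg : ∀ z ∈ D \ {z₀}, Real.log (dist z z₀) + h z < 0) {ρ : ℝ} (hρ : 0 < ρ) :
    ∃ m > 0, ∀ z ∈ D \ {z₀}, ρ ≤ infDist z (frontier D) → Real.log (dist z z₀) + h z ≤ -m := by
  set S : Set ℂ := {z | z ∈ closure D ∧ ρ ≤ infDist z (frontier D)} with hS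
  have hSD : S ⊆ D := by
    rintro z ⟨hz1, hz2⟩
    by_contra hzD
    have : z ∈ frontier D := by rw [hD.frontier_eq]; exact ⟨hz1, hzD⟩
    rw [infDist_zero_of_mem this] at hz2
    linarith
  have hSc : IsCompact S := hbd.isCompact_closure.inter_right
    (isClosed_le continuous_const (continuous_infDist_pt _))
  set E : ℂ → ℝ := fun z => dist z z₀ * Real.exp (h z) with hE
  have hEc : ContinuousOn E S := by
    intro z hz
    have : ContinuousAt h z := (hh.harmonicAt (hSD hz)).1.continuousAt
    have : ContinuousAt E z := (continuousAt_id.dist continuousAt_const).mul this.rexp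
    exact this.continuousWithinAt
  have hElog : ∀ z, z ≠ z₀ → E z = Real.exp (Real.log (dist z z₀) + h z) := by
    intro z hz
    rw [Real.exp_add, Real.exp_log (dist_pos.2 hz)]
  have hE1 : ∀ z ∈ D, E z < 1 := by
    intro z hz
    by_cases hzz : z = z₀
    · simp [hE, hzz]
    · rw [hElog z hzz]; exact Real.exp_lt_one_iff.2 (hneg z ⟨hz, hzz⟩)
  rcases S.eq_empty_or_nonempty with hemp | hne
  · refine ⟨1, one_pos, fun z hz hzρ => ?_⟩
    have : z ∈ S := ⟨subset_closure hz.1, hzρ⟩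
    rw [hemp] at this; exact this.elim
  obtain ⟨w, hw, hmax⟩ := hSc.exists_isMaxOn hne hEc
  have hM1 : max (E w) (1/2) < 1 := max_lt (hE1 w (hSD hw)) (by norm_num)
  have hM0 : 0 < max (E w) (1/2) := lt_max_of_lt_right (by norm_num)
  refine ⟨-Real.log (max (E w) (1/2)), by linarith [Real.log_neg hM0 hM1], fun z hz hzρ => ?_⟩
  have hzS : z ∈ S := ⟨subset_closure hz.1, hzρ⟩
  rw [neg_neg, Real.le_log_iff_exp_le hM0, ← hElog z hz.2]
  exact (hmax hzS : E z ≤ E w).trans (le_max_left _ _)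

/-- comparison of superlevel sets of `G_D(·,z₀)` and `ψ`:
there are `t₀ > 0` and `C > 1` with
`{G_D(·,z₀) ≥ -t} ⊆ {ψ ≥ -Ct}` for all `t ∈ (0,t₀)`. -/
theorem green_superlevel_subset_psi_superlevel
    (n : ℕ) (D : Set ℂ) (hD : IsRegularRegion n D)
    (z₀ : ℂ) (hz₀ : z₀ ∈ D)
    (G : ℂ → EReal) (hG : IsGreenFunction D z₀ G)
    (ν : ℂ → ℂ) (hν : IsOutwardUnitNormal D ν)
    (ψ : ℂ → EReal)
    (hψmeas : Measurable ψ) (hψsh : SubharmonicOnE ψ D)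
    (hψbd : ∀ z ∈ frontier D, ψ z = 0)
    (hψlel : 0 < lelongNumber ψ z₀)
    (U : Set ℂ) (hU : IsOpen U) (hUbd : frontier D ⊆ U)
    (ψC1 : ℂ → ℝ) (hψC1 : ContDiffOn ℝ 1 ψC1 U)
    (hψeq : ∀ z ∈ U ∩ closure D, ψ z = ((ψC1 z : ℝ) : EReal))
    (hνpos : ∀ z ∈ frontier D, 0 < fderiv ℝ ψC1 z (ν z)) :
    ∃ t₀ > (0:ℝ), ∃ C > (1:ℝ), ∀ t : ℝ, 0 < t → t < t₀ →
      {z | z ∈ D ∧ ((-t : ℝ) : EReal) ≤ G z} ⊆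
        {z | z ∈ D ∧ ((-(C * t) : ℝ) : EReal) ≤ ψ z} := by
  obtain ⟨hDo, -, hDb, -⟩ := id hD
  obtain ⟨h, hh, hGeq⟩ := hG.logharm
  have hneg : ∀ z ∈ D \ {z₀}, Real.log (dist z z₀) + h z < 0 := by
    intro z hz
    have := hG.neg z hz.1
    rw [hGeq z hz] at this
    exact_mod_cast this
  have hcomp : IsCompact (frontier D) := 
    Metric.isCompact_of_isClosed_isBounded isClosed_frontier
      (hDb.closure.subset frontier_subset_closure)
  have hfne : (frontier D).Nonempty := by
    rw [nonempty_frontier_iff]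
    refine ⟨⟨z₀, hz₀⟩, ?_⟩
    rintro rfl
    exact NormedSpace.unbounded_univ ℂ ℂ hDb
  obtain ⟨K, hK, hKq⟩ := quad_bound hD hν
  obtain ⟨L, hL, d, hd, hLip⟩ := psi_lip hcomp hU hUbd hψC1
  have hδ₀ : 0 < infDist z₀ (frontier D) := by
    rw [← isClosed_frontier.notMem_iff_infDist_pos hfne, hDo.frontier_eq]
    exact fun hx => hx.2 hz₀
  set r := min (1 / (2 * K)) (infDist z₀ (frontier D) / 2) with hr
  have hr0 : 0 < r := by positivity
  have hKr : 2 * r * K ≤ 1 := by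
    have : r ≤ 1 / (2 * K) := min_le_left _ _
    rw [le_div_iff₀ (by positivity)] at this
    linarith
  have hrz : 2 * r ≤ infDist z₀ (frontier D) := by
    have : r ≤ infDist z₀ (frontier D) / 2 := min_le_right _ _
    linarith
  set ρ := min (r / 2) d with hρ
  have hρ0 : 0 < ρ := by positivity
  obtain ⟨m, hm, hmb⟩ := green_interior hDo hDb hh hneg hρ0
  have hl2 : 0 < Real.log 2 := Real.log_pos (by norm_num)
  set κ := m / Real.log 2 / (2 * r) with hκ
  have hκ0 : 0 < κ := by positivity
  refine ⟨m, hm, max 2 (L / κ), lt_max_of_lt_left (by norm_num), ?_⟩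
  rintro t ht0 htm z ⟨hzD, hzG⟩
  refine ⟨hzD, ?_⟩
  have hzz : z ≠ z₀ := by
    rintro rfl
    rw [hG.pole] at hzG
    simp at hzG
  rw [hGeq z ⟨hzD, hzz⟩] at hzG
  have hzG : -t ≤ Real.log (dist z z₀) + h z := by exact_mod_cast hzG
  have hzρ : infDist z (frontier D) < ρ := by
    by_contra hcon
    have := hmb z ⟨hzD, hzz⟩ (not_lt.1 hcon)
    linarith
  obtain ⟨q, hq, hqd⟩ := hcomp.exists_infDist_eq_dist hfne z
  have hn1 := (hν q hq).1
  have hznorm := nearest_normal hD hν hzD hq hqd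
  rw [hqd] at hzρ
  have hδr : dist z q < r / 2 := lt_of_lt_of_le hzρ (min_le_left _ _)
  have hδd : dist z q < d := lt_of_lt_of_le hzρ (min_le_right _ _)
  have hball := interior_ball hDo hν hr0 hKr hKq hq
  set a := q - (r : ℂ) * ν q with ha
  have haq : dist a q = r := by
    rw [dist_eq_norm, ha, show q - (r : ℂ) * ν q - q = ((-r : ℝ) : ℂ) * ν q by push_cast; ring,
      norm_mul, hn1, Complex.norm_real, Real.norm_eq_abs, mul_one, abs_neg, abs_of_pos hr0]
  have hza : dist z a = r - dist z q := by
    have e : z - a = ((r - dist z q : ℝ) : ℂ) * ν q := by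
      rw [ha]; push_cast; linear_combination hznorm
    rw [dist_eq_norm z a, e, norm_mul, hn1, Complex.norm_real, Real.norm_eq_abs, mul_one,
      abs_of_pos (by linarith)]
  have hz₀a : z₀ ∉ ball a r := by
    intro hx
    rw [mem_ball] at hx
    have h1 := infDist_le_dist_of_mem (x := z₀) hq
    have h2 := dist_triangle z₀ a q
    linarith
  have hne0 : ∀ w ∈ ball a r, w ∈ D \ {z₀} := fun w hw =>
    ⟨hball hw, fun hw' => hz₀a (by rw [← (hw' : w = z₀)]; exact hw)⟩
  have hzq0 : 0 < dist z q := by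
    refine dist_pos.2 ?_
    rintro rfl
    rw [hDo.frontier_eq] at hq
    exact hq.2 hzD
  have hH := hopf (m := m) hh hr0 hm hball hz₀a (fun w hw => (hneg w (hne0 w hw)).le) (by
    intro w hw
    refine hmb w (hne0 w (by rw [mem_ball]; linarith)) ?_
    refine (min_le_left _ _).trans ?_
    rw [le_infDist hfne]
    intro p hp
    by_contra hcon
    have hpb : p ∈ ball a r := by
      rw [mem_ball]
      have := dist_triangle p w a
      rw [dist_comm p w] at this
      linarith [not_le.1 hcon]
    rw [hDo.frontier_eq] at hp
    exact hp.2 (hball hpb)) (z := z) (by linarith) (by linarith)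
  rw [hza, show r - (r - dist z q) = dist z q by ring,
    show m / Real.log 2 * (dist z q / (2 * r)) = κ * dist z q by rw [hκ]; ring] at hH
  have hδt : κ * dist z q ≤ t := by linarith
  obtain ⟨hzU, hzL⟩ := hLip q hq z hδd
  have hq0 : ψC1 q = 0 := by
    have h1 := hψeq q ⟨hUbd hq, frontier_subset_closure hq⟩
    rw [hψbd q hq] at h1
    exact_mod_cast h1.symm
  rw [hψeq z ⟨hzU, subset_closure hzD⟩, EReal.coe_le_coe_iff]
  rw [hq0, sub_zero] at hzL
  have h1 := (abs_le.1 hzL).1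
  have h2 : L * dist z q ≤ max 2 (L / κ) * t := by
    calc L * dist z q = L / κ * (κ * dist z q) := by field_simp
      _ ≤ L / κ * t := by gcongr
      _ ≤ _ := by gcongr; exact le_max_right _ _
  linarith
end

section
/- Let f be a holomorphic function on D such that liminf_{r→1⁻} ( ∫_{{z ∈ D : ψ(z) ≥ log r}} |f(z)|² dλ(z) ) / (1 − r) < +∞, where dλ is Lebesgue measure. Then f belongs to the analytic Hardy class H₂^(c)(D), i.e. |f|² admits a harmonic majorant on D. -/
open MeasureTheory Metric Complex Set Filter

open MeasureTheory Metric Complex Set Filter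

/-! ### Weak maximum principle -/

lemma hx_circleIntegrable_of_cont {g : ℂ → ℝ} {c : ℂ} {R : ℝ} {K : Set ℂ} (hg : ContinuousOn g K)
    (hR : 0 ≤ R) (hK : sphere c R ⊆ K) : CircleIntegrable g c R :=
  (hg.mono hK).circleIntegrable hR

lemma hx_holo_re_mean {F : ℂ → ℂ} {h : ℂ → ℝ} {S : Set ℂ}
    (hF : DifferentiableOn ℂ F S) (hh : ∀ w ∈ S, h w = (F w).re) {r : ℝ} {z : ℂ} (hr : 0 < r)
    (hz : closedBall z r ⊆ S) : Real.circleAverage h z r = h z := by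
  have hc : DiffContOnCl ℂ F (ball z |r|) := by
    rw [abs_of_pos hr]
    apply DifferentiableOn.diffContOnCl
    rw [closure_ball z hr.ne']
    exact hF.mono hz
  have hi : CircleIntegrable F z r :=
    (hF.continuousOn.mono (sphere_subset_closedBall.trans hz)).circleIntegrable hr.le
  have h1 : Set.EqOn h (Complex.reCLM ∘ F) (sphere z |r|) := by
    intro w hw
    rw [abs_of_pos hr] at hw
    exact hh w (hz (sphere_subset_closedBall hw))
  rw [Real.circleAverage_congr_sphere h1, Complex.reCLM.circleAverage_comp_comm hi,
    hc.circleAverage, hh z (hz (mem_closedBall_self hr.le))]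
  rfl

lemma hx_circleAverage_normSq (z : ℂ) {r : ℝ} (hr : 0 < r) :
    Real.circleAverage (fun w : ℂ => ‖w‖ ^ 2) z r = ‖z‖ ^ 2 + r ^ 2 := by
  set h : ℂ → ℝ := fun w => ((2 * (starRingEnd ℂ) z) * w + (r ^ 2 - ‖z‖ ^ 2 : ℝ)).re with hh
  have h1 : Set.EqOn (fun w : ℂ => ‖w‖ ^ 2) h (sphere z |r|) := by
    intro w hw
    rw [abs_of_pos hr, mem_sphere, dist_eq_norm] at hw
    have h2 : ‖w - z‖ ^ 2 = r ^ 2 := by rw [hw]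
    simp only [hh]
    rw [← Complex.normSq_eq_norm_sq, Complex.normSq_apply] at *
    simp only [sub_re, sub_im, add_re, mul_re, conj_re, conj_im, ofReal_re, mul_im, re_ofNat,
      im_ofNat, ← Complex.normSq_eq_norm_sq, Complex.normSq_apply] at *
    nlinarith
  rw [Real.circleAverage_congr_sphere h1]
  rw [hx_holo_re_mean (S := univ)
    (F := fun w => (2 * (starRingEnd ℂ) z) * w + (r ^ 2 - ‖z‖ ^ 2 : ℝ)) (by fun_prop)
    (fun w _ => rfl) hr (subset_univ _)]
  simp only [add_re, mul_re, conj_re, conj_im, ofReal_re, mul_im, re_ofNat,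
      im_ofNat, ← Complex.normSq_eq_norm_sq, Complex.normSq_apply]
  ring

lemma hx_weak_max {K : Set ℂ} (hK : IsCompact K) {w : ℂ → ℝ} (hw : ContinuousOn w K)
    (h : ∀ z ∈ K, w z ≤ 0 ∨ ∃ r > 0, sphere z r ⊆ K ∧ w z ≤ Real.circleAverage w z r) :
    ∀ z ∈ K, w z ≤ 0 := by
  obtain ⟨B, hB⟩ := hK.isBounded.exists_norm_le
  intro x hx
  by_contra! hpos
  have hB0 : 0 ≤ B := (norm_nonneg _).trans (hB x hx)
  set η : ℝ := w x / (2 * (B ^ 2 + 1)) with hη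
  have hη0 : 0 < η := by positivity
  have hηB : η * B ^ 2 < w x := by
    rw [hη, div_mul_eq_mul_div, div_lt_iff₀ (by positivity)]
    nlinarith
  have hnc : Continuous fun z : ℂ => ‖z‖ ^ 2 := by fun_prop
  have hcont : ContinuousOn (fun z => w z + η * ‖z‖ ^ 2) K :=
    hw.add (by fun_prop)
  obtain ⟨p, hpK, hp⟩ := hK.exists_isMaxOn ⟨x, hx⟩ hcont
  have hpx : w x + η * ‖x‖ ^ 2 ≤ w p + η * ‖p‖ ^ 2 := hp hx
  have hpB : ‖p‖ ^ 2 ≤ B ^ 2 := pow_le_pow_left₀ (norm_nonneg _) (hB p hpK) 2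
  have hwp : 0 < w p := by nlinarith [sq_nonneg ‖x‖]
  rcases h p hpK with h0 | ⟨r, hr, hs, hm⟩
  · linarith
  have hiw : CircleIntegrable w p r := hx_circleIntegrable_of_cont hw hr.le hs
  have hin : CircleIntegrable (fun z : ℂ => η * ‖z‖ ^ 2) p r :=
    (continuous_const.mul hnc).continuousOn.circleIntegrable hr.le
  have hle : Real.circleAverage (fun z => w z + η * ‖z‖ ^ 2) p r ≤ w p + η * ‖p‖ ^ 2 := by
    apply Real.circleAverage_mono_on_of_le_circle (hiw.add hin)
    intro z hz
    rw [abs_of_pos hr] at hz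
    exact hp (hs hz)
  rw [Real.circleAverage_fun_add hiw hin] at hle
  have h3 : Real.circleAverage (fun z : ℂ => η * ‖z‖ ^ 2) p r = η * (‖p‖ ^ 2 + r ^ 2) := by
    rw [← hx_circleAverage_normSq p hr]
    exact Real.circleAverage_fun_smul (a := η) (f := fun z : ℂ => ‖z‖ ^ 2)
  rw [h3] at hle
  have : 0 < η * r ^ 2 := by positivity
  linarith

/-! ### Poisson integral on a disc -/

/-- Poisson integral. -/
noncomputable def hxPI (g : ℂ → ℝ) (c : ℂ) (R : ℝ) (w : ℂ) : ℝ :=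
  Real.circleAverage (poissonKernel c w • g) c R

lemma hxPI_re {g : ℂ → ℝ} {c : ℂ} {R : ℝ} (hg : CircleIntegrable g c R) :
    ∃ F : ℂ → ℂ, DifferentiableOn ℂ F (ball c R) ∧ ∀ w ∈ ball c R, hxPI g c R w = (F w).re := by
  have hg0 : CircleIntegrable (fun z => g (z + c)) 0 R := by
    have : (fun θ : ℝ => g (circleMap 0 R θ + c)) = fun θ => g (circleMap c R θ) := by
      funext θ; simp [circleMap, add_comm]
    unfold CircleIntegrable
    rw [this]; exact hg
  have hg1 : CircleIntegrable (fun z => ((g (z + c) : ℝ) : ℂ)) 0 R := by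
    simp only [CircleIntegrable, intervalIntegrable_iff] at hg0 ⊢
    exact Complex.ofRealCLM.integrable_comp hg0
  refine ⟨fun w => Real.circleAverage
    (fun ζ ↦ herglotzRieszKernel 0 (w - c) ζ • ((g (ζ + c) : ℝ) : ℂ)) 0 R, ?_, ?_⟩
  · have := differentiableOn_circleAverage_herglotzRieszKernel_smul hg1
    refine this.comp (g := fun w => Real.circleAverage
      (fun ζ ↦ herglotzRieszKernel 0 w ζ • ((g (ζ + c) : ℝ) : ℂ)) 0 R)
      (f := fun w => w - c) (by fun_prop) ?_
    intro w hw
    simpa [dist_eq_norm] using hw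
  · intro w hw
    have hw' : w - c ∈ ball (0 : ℂ) R := by simpa [dist_eq_norm] using hw
    simp only []
    rw [re_circleAverage_herglotzRieszKernel_smul (g := fun z => g (z + c)) hg0 hw']
    unfold hxPI
    rw [← Real.circleAverage_map_add_const]
    congr 1
    funext z
    simp [poissonKernel_eq_re_herglotzRieszKernel, herglotzRieszKernel_add_const]

lemma hxPI_center {g : ℂ → ℝ} {c : ℂ} {R : ℝ} (hR : 0 < R) :
    hxPI g c R c = Real.circleAverage g c R := by
  unfold hxPI
  apply Real.circleAverage_congr_sphere
  intro z hz
  rw [abs_of_pos hR, mem_sphere, dist_eq_norm] at hz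
  simp [poissonKernel_def, hz, hR.ne']

lemma hx_pk_nonneg {c w z : ℂ} {R : ℝ} (hw : w ∈ ball c R) (hz : z ∈ sphere c R) :
    0 ≤ poissonKernel c w z := by
  rw [poissonKernel_def]
  rw [mem_sphere, dist_eq_norm] at hz
  rw [mem_ball, dist_eq_norm] at hw
  apply div_nonneg _ (sq_nonneg _)
  rw [hz]
  nlinarith [norm_nonneg (w - c)]

lemma hx_pk_cont {c w : ℂ} {R : ℝ} (hw : w ∈ ball c R) :
    ContinuousOn (poissonKernel c w) (sphere c |R|) := by
  rw [poissonKernel_eq_re_herglotzRieszKernel]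
  exact Complex.continuous_re.comp_continuousOn (continuousOn_herglotzRieszKernel_sphere hw)

lemma hx_pk_avg {c w : ℂ} {R : ℝ} (hw : w ∈ ball c R) :
    Real.circleAverage (poissonKernel c w) c R = 1 := by
  have := (InnerProductSpace.harmonicContOnCl_const (c := (1 : ℝ))
    (s := ball c R)).circleAverage_poissonKernel_smul hw
  rw [← this]
  congr 1
  funext z
  simp

lemma hxPI_int {g : ℂ → ℝ} {c w : ℂ} {R : ℝ} (hg : CircleIntegrable g c R) (hw : w ∈ ball c R) :
    CircleIntegrable (poissonKernel c w • g) c R :=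
  hg.continuousOn_smul (hx_pk_cont hw)

lemma hxPI_mono {g₁ g₂ : ℂ → ℝ} {c w : ℂ} {R : ℝ} (hg₁ : CircleIntegrable g₁ c R)
    (hg₂ : CircleIntegrable g₂ c R) (hw : w ∈ ball c R) (h : ∀ z ∈ sphere c R, g₁ z ≤ g₂ z) :
    hxPI g₁ c R w ≤ hxPI g₂ c R w := by
  apply Real.circleAverage_mono (hxPI_int hg₁ hw) (hxPI_int hg₂ hw)
  intro z hz
  have hR : 0 < R := pos_of_mem_ball hw
  rw [abs_of_pos hR] at hz
  exact mul_le_mul_of_nonneg_left (h z hz) (hx_pk_nonneg hw hz)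

lemma hxPI_bdry_upper {g : ℂ → ℝ} {c : ℂ} {R : ℝ} (hR : 0 < R) (hg : ContinuousOn g (sphere c R))
    {ζ : ℂ} (hζ : ζ ∈ sphere c R) {ε : ℝ} (hε : 0 < ε) :
    ∃ η > 0, ∀ w ∈ ball c R, dist w ζ < η → hxPI g c R w ≤ g ζ + ε := by
  obtain ⟨M, hM⟩ := (isCompact_sphere c R).exists_bound_of_continuousOn hg
  have hM0 : 0 ≤ M := (norm_nonneg _).trans (hM ζ hζ)
  obtain ⟨η₁, hη₁, hc⟩ := Metric.continuousOn_iff.1 hg ζ hζ (ε / 2) (by positivity)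
  refine ⟨min (η₁ / 2) (ε * η₁ ^ 2 / (32 * (M + 1) * R)), by positivity, ?_⟩
  intro w hw hwζ
  have hw1 : dist w ζ < η₁ / 2 := hwζ.trans_le (min_le_left _ _)
  have hw2 : dist w ζ < ε * η₁ ^ 2 / (32 * (M + 1) * R) := hwζ.trans_le (min_le_right _ _)
  have hwn : ‖w - c‖ < R := by simpa [dist_eq_norm] using hw
  have hd : R - ‖w - c‖ ≤ dist w ζ := by
    have h1 : dist ζ c ≤ dist ζ w + dist w c := dist_triangle _ _ _
    rw [mem_sphere.1 hζ, dist_comm ζ w, dist_eq_norm w c] at h1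
    linarith
  set E : ℝ := 2 * M * ((R ^ 2 - ‖w - c‖ ^ 2) / (η₁ / 2) ^ 2) with hE
  have hgi : CircleIntegrable g c R := hg.circleIntegrable hR.le
  have hki : CircleIntegrable (poissonKernel c w) c R :=
    ContinuousOn.circleIntegrable' (hx_pk_cont hw)
  have hki' : CircleIntegrable (fun z => (g ζ + ε / 2) * poissonKernel c w z) c R := by
    exact hki.const_fun_smul (a := g ζ + ε / 2)
  have hci : CircleIntegrable (fun _ : ℂ => E) c R := circleIntegrable_const _ _ _
  have hpt : ∀ z ∈ sphere c |R|, (poissonKernel c w • g) z ≤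
      (g ζ + ε / 2) * poissonKernel c w z + E := by
    intro z hz
    rw [abs_of_pos hR] at hz
    have hp := hx_pk_nonneg hw hz
    have hzn : ‖z - c‖ = R := by simpa [dist_eq_norm] using hz
    have hnum : 0 ≤ R ^ 2 - ‖w - c‖ ^ 2 := by nlinarith [norm_nonneg (w - c)]
    have hE0 : 0 ≤ E := by positivity
    simp only [Pi.smul_apply', smul_eq_mul]
    by_cases hzζ : dist z ζ < η₁
    · have h1 := hc z hz hzζ
      rw [Real.dist_eq] at h1
      have h2 : g z ≤ g ζ + ε / 2 := by linarith [(abs_lt.1 h1).2]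
      nlinarith [mul_le_mul_of_nonneg_left h2 hp]
    · push Not at hzζ
      have h1 : η₁ / 2 ≤ ‖(z - c) - (w - c)‖ := by
        have h2 : dist z ζ ≤ dist z w + dist w ζ := dist_triangle _ _ _
        rw [dist_eq_norm z w] at h2
        rw [sub_sub_sub_cancel_right]
        linarith
      have h3 : poissonKernel c w z ≤ (R ^ 2 - ‖w - c‖ ^ 2) / (η₁ / 2) ^ 2 := by
        rw [poissonKernel_def, hzn]
        gcongr
      have h4 : g z - g ζ ≤ 2 * M := by
        have h5 := (abs_le.1 (hM z hz)).2
        have h6 := (abs_le.1 (hM ζ hζ)).1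
        linarith
      have h7 : poissonKernel c w z * (g z - g ζ) ≤ E := by
        calc _ ≤ poissonKernel c w z * (2 * M) := mul_le_mul_of_nonneg_left h4 hp
          _ ≤ ((R ^ 2 - ‖w - c‖ ^ 2) / (η₁ / 2) ^ 2) * (2 * M) := by gcongr
          _ = E := by rw [hE]; ring
      nlinarith [mul_nonneg hp hε.le]
  have h1 := Real.circleAverage_mono (hxPI_int hgi hw) (hki'.add hci) hpt
  have h2 : Real.circleAverage ((fun z => (g ζ + ε / 2) * poissonKernel c w z) + fun _ => E) c R
      = (g ζ + ε / 2) + E := by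
    rw [Real.circleAverage_add hki' hci, Real.circleAverage_const]
    have : Real.circleAverage (fun z => (g ζ + ε / 2) * poissonKernel c w z) c R
        = (g ζ + ε / 2) * Real.circleAverage (poissonKernel c w) c R :=
      Real.circleAverage_fun_smul (a := g ζ + ε / 2) (f := poissonKernel c w)
    rw [this, hx_pk_avg hw, mul_one]
  have h3 : E ≤ ε / 2 := by
    have h4 : R ^ 2 - ‖w - c‖ ^ 2 ≤ 2 * R * dist w ζ := by nlinarith [norm_nonneg (w - c)]
    have h5 : dist w ζ * (32 * (M + 1) * R) ≤ ε * η₁ ^ 2 := by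
      rw [lt_div_iff₀ (by positivity)] at hw2; exact hw2.le
    have h6 : E = (R ^ 2 - ‖w - c‖ ^ 2) * (8 * M) / η₁ ^ 2 := by
      rw [hE]; field_simp; ring
    rw [h6, div_le_iff₀ (by positivity)]
    have h7 : 0 ≤ dist w ζ * R := by positivity
    have h8 : (R ^ 2 - ‖w - c‖ ^ 2) * (8 * M) ≤ 2 * R * dist w ζ * (8 * M) := by gcongr
    nlinarith
  rw [h2] at h1
  unfold hxPI
  linarith

lemma hxPI_neg {g : ℂ → ℝ} {c w : ℂ} {R : ℝ} : hxPI (fun z => - g z) c R w = - hxPI g c R w := by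
  unfold hxPI
  have : (poissonKernel c w • fun z => - g z) = fun z => (-1 : ℝ) • ((poissonKernel c w • g) z) := by
    funext z; simp
  rw [this, Real.circleAverage_fun_smul]
  simp

lemma hxPI_bdry {g : ℂ → ℝ} {c : ℂ} {R : ℝ} (hR : 0 < R) (hg : ContinuousOn g (sphere c R))
    {ζ : ℂ} (hζ : ζ ∈ sphere c R) {ε : ℝ} (hε : 0 < ε) :
    ∃ η > 0, ∀ w ∈ ball c R, dist w ζ < η → |hxPI g c R w - g ζ| ≤ ε := by
  obtain ⟨η₁, h1, h1'⟩ := hxPI_bdry_upper hR hg hζ hε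
  obtain ⟨η₂, h2, h2'⟩ := hxPI_bdry_upper hR hg.neg hζ hε
  refine ⟨min η₁ η₂, lt_min h1 h2, fun w hw hd => ?_⟩
  have h3 := h1' w hw (hd.trans_le (min_le_left _ _))
  have h4 := h2' w hw (hd.trans_le (min_le_right _ _))
  have h5 : hxPI (-g) c R w = - hxPI g c R w := hxPI_neg
  simp only [Pi.neg_apply] at h4
  rw [h5] at h4
  rw [abs_le]; constructor <;> linarith

open scoped Classical in
/-- Poisson modification. -/
noncomputable def hxMod (g : ℂ → ℝ) (c : ℂ) (R : ℝ) (w : ℂ) : ℝ :=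
  if w ∈ ball c R then hxPI g c R w else g w

lemma hxMod_in {g : ℂ → ℝ} {c w : ℂ} {R : ℝ} (hw : w ∈ ball c R) :
    hxMod g c R w = hxPI g c R w := by simp only [hxMod, if_pos hw]

lemma hxMod_out {g : ℂ → ℝ} {c w : ℂ} {R : ℝ} (hw : w ∉ ball c R) :
    hxMod g c R w = g w := by simp only [hxMod, if_neg hw]

lemma hxMod_cont {g : ℂ → ℝ} {c : ℂ} {R : ℝ} {D : Set ℂ} (hR : 0 < R)
    (hg : ContinuousOn g D) (hc : closedBall c R ⊆ D) : ContinuousOn (hxMod g c R) D := by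
  have hgs : ContinuousOn g (sphere c R) := hg.mono (sphere_subset_closedBall.trans hc)
  obtain ⟨F, hF, hFe⟩ := hxPI_re (hgs.circleIntegrable hR.le)
  intro z hz
  by_cases hzb : z ∈ ball c R
  · have h1 : ContinuousAt (fun w => (F w).re) z :=
      Complex.continuous_re.continuousAt.comp
        (hF.continuousOn.continuousAt (isOpen_ball.mem_nhds hzb))
    have h2 : hxMod g c R =ᶠ[nhds z] fun w => (F w).re := by
      filter_upwards [isOpen_ball.mem_nhds hzb] with w hw
      rw [hxMod_in hw, hFe w hw]
    exact (h1.congr h2.symm).continuousWithinAt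
  · rw [Metric.continuousWithinAt_iff]
    intro ε hε
    obtain ⟨η₁, hη₁, h1⟩ := Metric.continuousWithinAt_iff.1 (hg z hz) ε hε
    by_cases hzs : z ∈ sphere c R
    · obtain ⟨η₂, hη₂, h2⟩ := hxPI_bdry hR hgs hzs (half_pos hε)
      refine ⟨min η₁ η₂, lt_min hη₁ hη₂, fun w hw hd => ?_⟩
      rw [hxMod_out hzb]
      by_cases hwb : w ∈ ball c R
      · rw [hxMod_in hwb, Real.dist_eq]
        exact (h2 w hwb (hd.trans_le (min_le_right _ _))).trans_lt (half_lt_self hε)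
      · rw [hxMod_out hwb]
        exact h1 hw (hd.trans_le (min_le_left _ _))
    · have hlt : R < dist z c := by
        rw [mem_ball, not_lt] at hzb
        exact lt_of_le_of_ne hzb (fun h => hzs h.symm)
      refine ⟨min η₁ (dist z c - R), lt_min hη₁ (by linarith), fun w hw hd => ?_⟩
      have hwb : w ∉ ball c R := by
        rw [mem_ball, not_lt]
        have h2 := dist_triangle z w c
        have h3 := hd.trans_le (min_le_right _ _)
        rw [dist_comm z w] at h2
        linarith
      rw [hxMod_out hzb, hxMod_out hwb]
      exact h1 hw (hd.trans_le (min_le_left _ _))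

/-! ### Continuous subharmonic functions -/

/-- Continuous functions with local submean property. -/
def HxSub (D : Set ℂ) (v : ℂ → ℝ) : Prop :=
  ContinuousOn v D ∧ ∀ z ∈ D, ∃ r₀ > 0, ∀ r, 0 < r → r < r₀ → v z ≤ Real.circleAverage v z r

lemma HxSub.le_PI {D : Set ℂ} {v : ℂ → ℝ} (hv : HxSub D v) {c : ℂ} {R : ℝ}
    (hR : 0 < R) (hc : closedBall c R ⊆ D) : ∀ w ∈ ball c R, v w ≤ hxPI v c R w := by
  have hgs : ContinuousOn v (sphere c R) := hv.1.mono (sphere_subset_closedBall.trans hc)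
  obtain ⟨F, hF, hFe⟩ := hxPI_re (hgs.circleIntegrable hR.le)
  have hmc : ContinuousOn (hxMod v c R) (closedBall c R) := (hxMod_cont hR hv.1 hc).mono hc
  have hvc : ContinuousOn v (closedBall c R) := hv.1.mono hc
  have key := hx_weak_max (isCompact_closedBall c R) (w := fun z => v z - hxMod v c R z)
    (hvc.sub hmc) ?_
  · intro w hw
    have := key w (ball_subset_closedBall hw)
    rw [hxMod_in hw] at this
    linarith
  · intro z hz
    by_cases hzb : z ∈ ball c R
    · right
      obtain ⟨r₀, hr₀, h⟩ := hv.2 z (hc hz)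
      obtain ⟨r₁, hr₁, h1⟩ := Metric.isOpen_iff.1 isOpen_ball z hzb
      set r := min r₀ r₁ / 2 with hr
      have hm : 0 < min r₀ r₁ := lt_min hr₀ hr₁
      have hrpos : 0 < r := by positivity
      have hrlt : r < min r₀ r₁ := half_lt_self hm
      have hcb : closedBall z r ⊆ ball c R :=
        (closedBall_subset_ball (hrlt.trans_le (min_le_right _ _))).trans h1
      have hs : sphere z r ⊆ closedBall c R :=
        sphere_subset_closedBall.trans (hcb.trans ball_subset_closedBall)
      refine ⟨r, hrpos, hs, ?_⟩
      rw [Real.circleAverage_fun_sub (hx_circleIntegrable_of_cont hvc hrpos.le hs)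
        (hx_circleIntegrable_of_cont hmc hrpos.le hs)]
      rw [hx_holo_re_mean (h := hxMod v c R) hF
        (fun w hw => by rw [hxMod_in hw, hFe w hw]) hrpos hcb]
      linarith [h r hrpos (hrlt.trans_le (min_le_left _ _))]
    · left
      rw [hxMod_out hzb]; simp

lemma HxSub.submean {D : Set ℂ} {v : ℂ → ℝ} (hv : HxSub D v) {c : ℂ} {R : ℝ}
    (hR : 0 < R) (hc : closedBall c R ⊆ D) : v c ≤ Real.circleAverage v c R := by
  rw [← hxPI_center hR]
  exact hv.le_PI hR hc c (mem_ball_self hR)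

lemma HxSub.le_mod {D : Set ℂ} {v : ℂ → ℝ} (hv : HxSub D v) {c : ℂ} {R : ℝ}
    (hR : 0 < R) (hc : closedBall c R ⊆ D) (w : ℂ) : v w ≤ hxMod v c R w := by
  by_cases hw : w ∈ ball c R
  · rw [hxMod_in hw]; exact hv.le_PI hR hc w hw
  · rw [hxMod_out hw]

lemma hx_small_radius {D : Set ℂ} (hD : IsOpen D) {z : ℂ} (hz : z ∈ D) :
    ∃ r₁ > 0, ∀ r < r₁, closedBall z r ⊆ D := by
  obtain ⟨r₁, hr₁, h1⟩ := Metric.isOpen_iff.1 hD z hz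
  exact ⟨r₁, hr₁, fun r hr => (closedBall_subset_ball hr).trans h1⟩

lemma HxSub.mod {D : Set ℂ} (hD : IsOpen D) {v : ℂ → ℝ} (hv : HxSub D v) {c : ℂ} {R : ℝ}
    (hR : 0 < R) (hc : closedBall c R ⊆ D) : HxSub D (hxMod v c R) := by
  have hmc := hxMod_cont hR hv.1 hc
  refine ⟨hmc, fun z hz => ?_⟩
  by_cases hzb : z ∈ ball c R
  · have hgs : ContinuousOn v (sphere c R) := hv.1.mono (sphere_subset_closedBall.trans hc)
    obtain ⟨F, hF, hFe⟩ := hxPI_re (hgs.circleIntegrable hR.le)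
    obtain ⟨r₁, hr₁, h1⟩ := hx_small_radius isOpen_ball hzb
    refine ⟨r₁, hr₁, fun r hr hr1 => ?_⟩
    rw [hx_holo_re_mean (h := hxMod v c R) hF
        (fun w hw => by rw [hxMod_in hw, hFe w hw]) hr (h1 r hr1)]
  · obtain ⟨r₁, hr₁, h1⟩ := hx_small_radius hD hz
    refine ⟨r₁, hr₁, fun r hr hr1 => ?_⟩
    have hs : sphere z r ⊆ D := sphere_subset_closedBall.trans (h1 r hr1)
    rw [hxMod_out hzb]
    refine (hv.submean hr (h1 r hr1)).trans ?_
    exact Real.circleAverage_mono (hx_circleIntegrable_of_cont hv.1 hr.le hs)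
      (hx_circleIntegrable_of_cont hmc hr.le hs) (fun w _ => hv.le_mod hR hc w)

lemma HxSub.max {D : Set ℂ} (hD : IsOpen D) {v w : ℂ → ℝ} (hv : HxSub D v) (hw : HxSub D w) :
    HxSub D (fun z => max (v z) (w z)) := by
  have hmc : ContinuousOn (fun z => Max.max (v z) (w z)) D := hv.1.sup hw.1
  refine ⟨hmc, fun z hz => ?_⟩
  obtain ⟨r₁, hr₁, h1⟩ := hx_small_radius hD hz
  refine ⟨r₁, hr₁, fun r hr hr1 => ?_⟩
  have hs : sphere z r ⊆ D := sphere_subset_closedBall.trans (h1 r hr1)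
  apply max_le
  · exact (hv.submean hr (h1 r hr1)).trans
      (Real.circleAverage_mono (hx_circleIntegrable_of_cont hv.1 hr.le hs)
      (hx_circleIntegrable_of_cont hmc hr.le hs) (fun x _ => le_max_left _ _))
  · exact (hw.submean hr (h1 r hr1)).trans
      (Real.circleAverage_mono (hx_circleIntegrable_of_cont hw.1 hr.le hs)
      (hx_circleIntegrable_of_cont hmc hr.le hs) (fun x _ => le_max_right _ _))

/-! ### Area submean inequality -/

lemma HxSub.area {D : Set ℂ} {v : ℂ → ℝ} (hv : HxSub D v)
    (hnn : ∀ z ∈ D, 0 ≤ v z) {c : ℂ} {R : ℝ} (hR : 0 < R) (hc : closedBall c R ⊆ D) :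
    ENNReal.ofReal (R / 2 * (2 * Real.pi * v c)) * ENNReal.ofReal (R / 2) ≤
      ∫⁻ z in ball c R, ENNReal.ofReal (v z) := by
  classical
  have hbD : ball c R ⊆ D := ball_subset_closedBall.trans hc
  set g : ℂ → ℝ := (ball c R).piecewise v (fun _ => 0) with hg
  have hgm : Measurable g :=
    (hv.1.mono hbD).measurable_piecewise continuousOn_const measurableSet_ball
  have h1 : ∫⁻ z in ball c R, ENNReal.ofReal (v z) = ∫⁻ z, ENNReal.ofReal (g z) := by
    rw [← lintegral_indicator measurableSet_ball]
    congr 1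
    funext z
    by_cases hz : z ∈ ball c R
    · simp [hg, hz, -mem_ball]
    · simp [hg, hz, -mem_ball]
  have h2 : ∫⁻ z, ENNReal.ofReal (g z) = ∫⁻ z, ENNReal.ofReal (g (c + z)) :=
    (lintegral_add_left_eq_self (μ := (volume : Measure ℂ)) (fun z => ENNReal.ofReal (g z)) c).symm
  rw [h1, h2, ← Complex.lintegral_comp_polarCoord_symm]
  have h3 : (volume : Measure (ℝ × ℝ)).restrict polarCoord.target =
      ((volume : Measure ℝ).restrict (Ioi 0)).prod
        ((volume : Measure ℝ).restrict (Ioo (-Real.pi) Real.pi)) := by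
    rw [polarCoord_target, Measure.prod_restrict]; rfl
  rw [h3, lintegral_prod]
  swap
  · apply Measurable.aemeasurable
    simp only [Complex.polarCoord_symm_apply, smul_eq_mul]
    refine Measurable.mul (measurable_fst.ennreal_ofReal) ?_
    apply Measurable.ennreal_ofReal
    apply hgm.comp
    fun_prop
  have h4 : ∀ r ∈ Ioo (R / 2) R, ENNReal.ofReal (R / 2 * (2 * Real.pi * v c)) ≤
      ∫⁻ θ in Ioo (-Real.pi) Real.pi,
        ENNReal.ofReal r • ENNReal.ofReal (g (c + Complex.polarCoord.symm (r, θ))) := by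
    intro r hr
    have hr0 : 0 < r := (half_pos hR).trans hr.1
    have hcr : closedBall c r ⊆ D := (closedBall_subset_closedBall hr.2.le).trans hc
    have hsr : sphere c r ⊆ D := sphere_subset_closedBall.trans hcr
    have he : ∀ θ, g (c + Complex.polarCoord.symm (r, θ)) = v (circleMap c r θ) := by
      intro θ
      have : c + Complex.polarCoord.symm (r, θ) = circleMap c r θ := by
        rw [Complex.polarCoord_symm_apply, circleMap, Complex.exp_mul_I]
        simp
      rw [this, hg, piecewise_eq_of_mem]
      rw [mem_ball, dist_eq_norm]
      simpa [abs_of_pos hr0] using hr.2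
    simp only [he, smul_eq_mul]
    have hcm : Continuous fun θ => v (circleMap c r θ) :=
      hv.1.comp_continuous (continuous_circleMap c r)
        (fun θ => hsr (circleMap_mem_sphere c hr0.le θ))
    rw [lintegral_const_mul _ hcm.measurable.ennreal_ofReal]
    rw [← ofReal_integral_eq_lintegral_ofReal]
    · rw [← ENNReal.ofReal_mul hr0.le]
      apply ENNReal.ofReal_le_ofReal
      have h5 : ∫ θ in Ioo (-Real.pi) Real.pi, v (circleMap c r θ) =
          2 * Real.pi * Real.circleAverage v c r := by
        rw [← integral_Ioc_eq_integral_Ioo,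
          ← intervalIntegral.integral_of_le (by linarith [Real.pi_pos]),
          Real.circleAverage_eq_integral_add (-Real.pi),
          intervalIntegral.integral_comp_add_right (fun θ => v (circleMap c r θ))]
        rw [smul_eq_mul, mul_inv_cancel_left₀ (by positivity)]
        congr 1 <;> ring
      rw [h5]
      have h6 := hv.submean hr0 hcr
      have h7 := hnn c (hc (mem_closedBall_self hR.le))
      have := hr.1
      have := Real.pi_pos
      gcongr
    · exact (hcm.integrableOn_Icc (a := -Real.pi) (b := Real.pi)).mono_set Ioo_subset_Icc_self
    · exact ae_of_all _ fun θ => hnn _ (hsr (circleMap_mem_sphere c hr0.le θ))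
  calc _ = ∫⁻ r in Ioo (R / 2) R, ENNReal.ofReal (R / 2 * (2 * Real.pi * v c)) := by
        rw [setLIntegral_const, Real.volume_Ioo]
        congr 2; ring
    _ ≤ ∫⁻ r in Ioo (R / 2) R, ∫⁻ θ in Ioo (-Real.pi) Real.pi,
        ENNReal.ofReal r • ENNReal.ofReal (g (c + Complex.polarCoord.symm (r, θ))) :=
        setLIntegral_mono' measurableSet_Ioo h4
    _ ≤ _ := lintegral_mono_set (fun r hr => (half_pos hR).trans hr.1)

/-! ### The Perron method -/

lemma hx_perron {D : Set ℂ} (hD : IsOpen D) {u : ℂ → ℝ} (F : Set (ℂ → ℝ)) (huF : u ∈ F)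
    (hsub : ∀ v ∈ F, HxSub D v)
    (hmax : ∀ v ∈ F, ∀ w ∈ F, (fun z => max (v z) (w z)) ∈ F)
    (hmod : ∀ v ∈ F, ∀ c R, 0 < R → closedBall c R ⊆ D → hxMod v c R ∈ F)
    (hbd : ∀ c R, 0 < R → closedBall c R ⊆ D → ∃ M, ∀ v ∈ F, ∀ z ∈ closedBall c R, v z ≤ M) :
    ∃ V : ℂ → ℝ, HarmonicOnD V D ∧ ∀ z ∈ D, u z ≤ V z := by
  set V : ℂ → ℝ := fun z => ⨆ v : F, v.1 z with hV
  have : Nonempty F := ⟨⟨u, huF⟩⟩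
  have hball : ∀ z ∈ D, ∃ R > 0, closedBall z R ⊆ D := by
    intro z hz
    obtain ⟨r, hr, h⟩ := hx_small_radius hD hz
    exact ⟨r / 2, half_pos hr, h _ (half_lt_self hr)⟩
  have hbdd : ∀ z ∈ D, BddAbove (range fun v : F => v.1 z) := by
    intro z hz
    obtain ⟨R, hR, hR'⟩ := hball z hz
    obtain ⟨M, hM⟩ := hbd z R hR hR'
    refine ⟨M, ?_⟩
    rintro _ ⟨v, rfl⟩
    exact hM v.1 v.2 z (mem_closedBall_self hR.le)
  have hle : ∀ v ∈ F, ∀ z ∈ D, v z ≤ V z := fun v hv z hz => le_ciSup (hbdd z hz) ⟨v, hv⟩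
  refine ⟨V, ?_, hle u huF⟩
  intro c hc
  obtain ⟨R, hR, hcR⟩ := hball c hc
  have hbD : ball c R ⊆ D := ball_subset_closedBall.trans hcR
  have hsD : sphere c R ⊆ D := sphere_subset_closedBall.trans hcR
  obtain ⟨M, hM⟩ := hbd c R hR hcR
  let x : ℕ → ℂ := TopologicalSpace.denseSeq ℂ
  have hstep0 : ∀ δ > 0, ∀ w ∈ F, ∀ n : ℕ, ∃ w' ∈ F, (∀ z, w z ≤ w' z) ∧
      ∀ i < n, x i ∈ D → V (x i) - δ < w' (x i) := by
    intro δ hδ w hw n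
    induction n with
    | zero => exact ⟨w, hw, fun _ => le_rfl, fun i hi => absurd hi (Nat.not_lt_zero _)⟩
    | succ n ih =>
      obtain ⟨w', hw', h1, h2⟩ := ih
      by_cases hxn : x n ∈ D
      · obtain ⟨v, hv⟩ := exists_lt_of_lt_ciSup (show V (x n) - δ < ⨆ v : F, v.1 (x n) by
          simp only [hV]; linarith)
        refine ⟨_, hmax w' hw' v.1 v.2, fun z => (h1 z).trans (le_max_left _ _), ?_⟩
        intro i hi hxi
        rcases Nat.lt_succ_iff_lt_or_eq.1 hi with hlt | rfl
        · exact (h2 i hlt hxi).trans_le (le_max_left _ _)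
        · exact hv.trans_le (le_max_right _ _)
      · refine ⟨w', hw', h1, fun i hi hxi => ?_⟩
        rcases Nat.lt_succ_iff_lt_or_eq.1 hi with hlt | rfl
        · exact h2 i hlt hxi
        · exact absurd hxi hxn
  have hstep : ∀ (n : ℕ) (w : F), ∃ w' : F, (∀ z, w.1 z ≤ w'.1 z) ∧
      ∀ i < n, x i ∈ D → V (x i) - 1 / ((n : ℝ) + 1) < w'.1 (x i) := by
    intro n w
    obtain ⟨w', h1, h2⟩ := hstep0 (1 / ((n : ℝ) + 1)) (by positivity) w.1 w.2 n
    exact ⟨⟨w', h1⟩, h2⟩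
  choose nxt hnxt1 hnxt2 using hstep
  let s : ℕ → F := fun n => Nat.rec ⟨u, huF⟩ (fun k w => nxt k w) n
  have hs_succ : ∀ n, s (n + 1) = nxt n (s n) := fun n => rfl
  have hmono : ∀ z, Monotone fun n => (s n).1 z := by
    intro z
    apply monotone_nat_of_le_succ
    intro n
    rw [hs_succ]
    exact hnxt1 n (s n) z
  have hslt : ∀ n, ∀ i < n, x i ∈ D → V (x i) - 1 / ((n : ℝ) + 1) < (s (n + 1)).1 (x i) := by
    intro n
    rw [hs_succ]
    exact hnxt2 n (s n)
  set W : ℂ → ℝ := fun z => ⨆ n, (s n).1 z with hW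
  have hlim : ∀ z ∈ closedBall c R, Tendsto (fun n => (s n).1 z) atTop (nhds (W z)) := by
    intro z hz
    apply tendsto_atTop_ciSup (hmono z)
    refine ⟨M, ?_⟩
    rintro _ ⟨n, rfl⟩
    exact hM _ (s n).2 z hz
  -- bounds on the sphere
  obtain ⟨B₀, hB₀⟩ := (isCompact_sphere c R).exists_bound_of_continuousOn
    ((hsub _ (s 0).2).1.mono hsD)
  set B : ℝ := max |M| B₀ with hB
  have hsB : ∀ n, ∀ z ∈ sphere c R, |(s n).1 z| ≤ B := by
    intro n z hz
    rw [abs_le]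
    constructor
    · have h1 := (abs_le.1 (hB₀ z hz)).1
      have h2 : (s 0).1 z ≤ (s n).1 z := hmono z (Nat.zero_le n)
      have h3 := le_max_right |M| B₀
      linarith
    · exact (hM _ (s n).2 z (sphere_subset_closedBall hz)).trans
        ((le_abs_self M).trans (le_max_left _ _))
  have hcmem : ∀ θ, circleMap c R θ ∈ sphere c R := circleMap_mem_sphere c hR.le
  have hscont : ∀ n, Continuous fun θ => (s n).1 (circleMap c R θ) := fun n =>
    ((hsub _ (s n).2).1).comp_continuous (continuous_circleMap c R) (fun θ => hsD (hcmem θ))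
  have hWlim : ∀ θ, Tendsto (fun n => (s n).1 (circleMap c R θ)) atTop
      (nhds (W (circleMap c R θ))) := fun θ => hlim _ (sphere_subset_closedBall (hcmem θ))
  have hWm : Measurable fun θ => W (circleMap c R θ) :=
    measurable_of_tendsto_metrizable (fun n => (hscont n).measurable) (tendsto_pi_nhds.2 hWlim)
  have hWB : ∀ θ, ‖W (circleMap c R θ)‖ ≤ B := fun θ =>
    le_of_tendsto (hWlim θ).norm (Eventually.of_forall fun n => hsB n _ (hcmem θ))
  have hWi : CircleIntegrable W c R := by
    unfold CircleIntegrable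
    rw [intervalIntegrable_iff]
    exact Measure.integrableOn_of_bounded (by rw [uIoc]; exact measure_Ioc_lt_top.ne) hWm.aestronglyMeasurable
      (ae_of_all _ hWB)
  obtain ⟨H, hH, hHe⟩ := hxPI_re hWi
  have hPIlim : ∀ z ∈ ball c R, Tendsto (fun n => hxPI (s n).1 c R z) atTop
      (nhds (hxPI W c R z)) := by
    intro z hz
    have hkc : Continuous fun θ => poissonKernel c z (circleMap c R θ) :=
      (hx_pk_cont hz).comp_continuous (continuous_circleMap c R)
        (fun θ => circleMap_mem_sphere' c R θ)
    unfold hxPI Real.circleAverage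
    apply Tendsto.const_smul
    apply intervalIntegral.tendsto_integral_filter_of_dominated_convergence
      (fun θ => |poissonKernel c z (circleMap c R θ)| * B)
    · exact Eventually.of_forall fun n => (hkc.mul (hscont n)).aestronglyMeasurable
    · refine Eventually.of_forall fun n => ae_of_all _ fun θ _ => ?_
      simp only [Pi.smul_apply', smul_eq_mul, norm_mul, Real.norm_eq_abs]
      exact mul_le_mul_of_nonneg_left (hsB n _ (hcmem θ)) (abs_nonneg _)
    · exact (hkc.abs.mul continuous_const).intervalIntegrable _ _
    · refine ae_of_all _ fun θ _ => ?_
      exact (hWlim θ).const_mul _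
  have hupper : ∀ z ∈ ball c R, hxPI W c R z ≤ V z := by
    intro z hz
    refine le_of_tendsto (hPIlim z hz) (Eventually.of_forall fun n => ?_)
    rw [← hxMod_in hz]
    exact hle _ (hmod _ (s n).2 c R hR hcR) z (hbD hz)
  have hdense : ∀ i, x i ∈ ball c R → V (x i) ≤ hxPI W c R (x i) := by
    intro i hi
    have h1 : Tendsto (fun n : ℕ => V (x i) - 1 / ((n : ℝ) + 1)) atTop (nhds (V (x i))) := by
      simpa using tendsto_one_div_add_atTop_nhds_zero_nat.const_sub (V (x i))
    refine le_of_tendsto_of_tendsto h1 ((tendsto_add_atTop_iff_nat 1).2 (hPIlim _ hi)) ?_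
    filter_upwards [eventually_gt_atTop i] with n hn
    refine (hslt n i hn (hbD hi)).le.trans ?_
    exact (hsub _ (s (n + 1)).2).le_PI hR hcR _ hi
  have hHc : ContinuousOn (fun z => hxPI W c R z) (ball c R) := by
    have : ContinuousOn (fun z => (H z).re) (ball c R) :=
      Complex.continuous_re.comp_continuousOn hH.continuousOn
    exact this.congr fun z hz => hHe z hz
  have hlower : ∀ v ∈ F, ∀ z ∈ ball c R, v z ≤ hxPI W c R z := by
    intro v hv z hz
    by_contra! hlt
    have hdc : ContinuousOn (fun z => v z - hxPI W c R z) (ball c R) :=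
      ((hsub v hv).1.mono hbD).sub hHc
    have hopen : IsOpen (ball c R ∩ (fun z => v z - hxPI W c R z) ⁻¹' Ioi 0) :=
      hdc.isOpen_inter_preimage isOpen_ball isOpen_Ioi
    obtain ⟨i, hy⟩ := (TopologicalSpace.denseRange_denseSeq ℂ).exists_mem_open hopen
      ⟨z, hz, by simpa using hlt⟩
    change x i ∈ _ at hy
    have h1 := hdense i hy.1
    have h2 := hle v hv _ (hbD hy.1)
    have h3 : 0 < v (x i) - hxPI W c R (x i) := hy.2
    linarith
  refine ⟨R, hR, hbD, H, hH, fun w hw => ?_⟩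
  rw [← hHe w hw]
  exact le_antisymm (ciSup_le fun v => hlower v.1 v.2 w hw) (hupper w hw)

/-! ### Huber function and the key integral estimate -/

/-- A smoothed version of `t ↦ max (-ε - t) 0`. -/
noncomputable def hxPhi (ε t : ℝ) : ℝ :=
  (min (max (-ε - t) 0) ε * max (-ε - t) 0 - (min (max (-ε - t) 0) ε) ^ 2 / 2) / ε

/-- Derivative of `hxPhi`. -/
noncomputable def hxDPhi (ε t : ℝ) : ℝ := -(min (max (-ε - t) 0) ε) / ε

lemma hxPhi_cont (ε : ℝ) : Continuous (hxPhi ε) := by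
  unfold hxPhi; fun_prop

lemma hxPhi_nonneg {ε : ℝ} (hε : 0 < ε) (t : ℝ) : 0 ≤ hxPhi ε t := by
  unfold hxPhi
  have h1 : 0 ≤ max (-ε - t) 0 := le_max_right _ _
  set m := max (-ε - t) 0
  have h2 : 0 ≤ min m ε := le_min h1 hε.le
  have h3 : min m ε ≤ m := min_le_left _ _
  apply div_nonneg _ hε.le
  nlinarith

lemma hxPhi_zero {ε t : ℝ} (hε : 0 < ε) (h : -ε ≤ t) : hxPhi ε t = 0 := by
  unfold hxPhi
  rw [max_eq_right (by linarith), min_eq_left hε.le]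
  simp

lemma hxDPhi_nonpos {ε : ℝ} (hε : 0 < ε) (t : ℝ) : hxDPhi ε t ≤ 0 := by
  unfold hxDPhi
  have h2 : 0 ≤ min (max (-ε - t) 0) ε := le_min (le_max_right _ _) hε.le
  apply div_nonpos_of_nonpos_of_nonneg _ hε.le
  linarith

lemma hxPhi_low {ε t : ℝ} (hε : 0 < ε) (h : t ≤ -2 * ε) : hxPhi ε t = -ε - t - ε / 2 := by
  unfold hxPhi
  rw [max_eq_left (by linarith), min_eq_right (by linarith)]
  field_simp

lemma hxDPhi_low {ε t : ℝ} (hε : 0 < ε) (h : t ≤ -2 * ε) : hxDPhi ε t = -1 := by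
  unfold hxDPhi
  rw [max_eq_left (by linarith), min_eq_right (by linarith)]
  field_simp

lemma hxPhi_quad {ε : ℝ} (hε : 0 < ε) (s t : ℝ) :
    hxPhi ε s ≤ hxPhi ε t + hxDPhi ε t * (s - t) + (s - t) ^ 2 / (2 * ε) := by
  have key : ∀ m p n q : ℝ, p = min m ε → q = min n ε → m = max (-ε - t) 0 →
      n = max (-ε - s) 0 → q * n - q ^ 2 / 2 ≤ (p * m - p ^ 2 / 2) - p * (s - t) +
        (s - t) ^ 2 / 2 := by
    intro m p n q hp hq hm hn
    rcases le_total (-ε - t) 0 with h1 | h1 <;> rcases le_total (-ε - s) 0 with h2 | h2 <;>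
      rcases le_total m ε with h3 | h3 <;> rcases le_total n ε with h4 | h4 <;>
      simp only [max_eq_left, max_eq_right, min_eq_left, min_eq_right, h1, h2, h3, h4]
        at hp hq hm hn <;> rw [hm] at h3 <;> rw [hn] at h4 <;> simp only [hp, hq, hm, hn] <;>
      nlinarith [sq_nonneg (s - t), sq_nonneg (-ε - s), sq_nonneg (-ε - t - ε),
        sq_nonneg (-ε - s - ε), sq_nonneg (-ε - t), mul_nonneg hε.le (sub_nonneg.2 h3),
        mul_nonneg hε.le (sub_nonneg.2 h4)]
  have := key _ _ _ _ rfl rfl rfl rfl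
  unfold hxPhi hxDPhi
  rw [← sub_nonneg] at this ⊢
  refine (div_nonneg this hε.le).trans_eq ?_
  field_simp
  ring

lemma hx_ci_of_bdd {g : ℂ → ℝ} (hm : Measurable g) {z : ℂ} {r B : ℝ}
    (hb : ∀ θ, |g (circleMap z r θ)| ≤ B) : CircleIntegrable g z r := by
  unfold CircleIntegrable
  rw [intervalIntegrable_iff]
  exact Measure.integrableOn_of_bounded (by rw [uIoc]; exact measure_Ioc_lt_top.ne)
    (hm.comp (continuous_circleMap z r).measurable).aestronglyMeasurable
    (ae_of_all _ hb)

lemma hx_lavg {g : ℂ → ℝ} {z : ℂ} {r : ℝ} (hi : CircleIntegrable g z r)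
    (hnn : ∀ θ, 0 ≤ g (circleMap z r θ)) :
    ∫⁻ θ in Ioc 0 (2 * Real.pi), ENNReal.ofReal (g (circleMap z r θ)) =
      ENNReal.ofReal (2 * Real.pi * Real.circleAverage g z r) := by
  rw [← ofReal_integral_eq_lintegral_ofReal]
  · congr 1
    rw [← intervalIntegral.integral_of_le (by positivity), Real.circleAverage, smul_eq_mul,
      mul_inv_cancel_left₀ (by positivity)]
  · have := hi
    unfold CircleIntegrable at this
    rwa [intervalIntegrable_iff_integrableOn_Ioc_of_le (by positivity)] at this
  · exact ae_of_all _ hnn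

lemma hx_tonelli {V P : ℂ → ENNReal} (hV : Measurable V) (hP : Measurable P) (δ : ℝ) :
    ∫⁻ z, V z * ∫⁻ θ in Ioc 0 (2 * Real.pi), P (circleMap z δ θ) =
      ∫⁻ z, P z * ∫⁻ θ in Ioc 0 (2 * Real.pi), V (circleMap z (-δ) θ) := by
  have hc : ∀ δ : ℝ, Measurable fun p : ℂ × ℝ => circleMap p.1 δ p.2 := by
    intro δ
    unfold circleMap
    fun_prop
  have h1 : ∀ z, V z * ∫⁻ θ in Ioc 0 (2 * Real.pi), P (circleMap z δ θ) =
      ∫⁻ θ in Ioc 0 (2 * Real.pi), V z * P (circleMap z δ θ) := by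
    intro z
    rw [lintegral_const_mul]
    exact hP.comp (continuous_circleMap z δ).measurable
  have h2 : ∀ z, P z * ∫⁻ θ in Ioc 0 (2 * Real.pi), V (circleMap z (-δ) θ) =
      ∫⁻ θ in Ioc 0 (2 * Real.pi), P z * V (circleMap z (-δ) θ) := by
    intro z
    rw [lintegral_const_mul]
    exact hV.comp (continuous_circleMap z _).measurable
  simp_rw [h1, h2]
  have m1 := ((hP.comp measurable_fst).mul (hV.comp (hc (-δ)))).aemeasurable
    (μ := (volume : Measure ℂ).prod ((volume : Measure ℝ).restrict (Ioc 0 (2 * Real.pi))))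
  have m2 := ((hV.comp measurable_fst).mul (hP.comp (hc δ))).aemeasurable
    (μ := (volume : Measure ℂ).prod ((volume : Measure ℝ).restrict (Ioc 0 (2 * Real.pi))))
  have s1 := lintegral_lintegral_swap (f := fun z θ => P z * V (circleMap z (-δ) θ)) m1
  have s2 := lintegral_lintegral_swap (f := fun z θ => V z * P (circleMap z δ θ)) m2
  rw [s1, s2]
  congr 1
  funext θ
  rw [← lintegral_add_right_eq_self (μ := (volume : Measure ℂ))
    (fun z => P z * V (circleMap z (-δ) θ)) (circleMap 0 δ θ)]
  congr 1
  funext z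
  rw [mul_comm]
  congr 2 <;> simp [circleMap, add_comm]

lemma hx_point {D : Set ℂ} {ρ : ℂ → ℝ} (hρm : Measurable ρ) {B : ℝ}
    (hρB : ∀ z ∈ D, |ρ z| ≤ B) {z : ℂ} {δ : ℝ} (hδ : 0 < δ) (hz : closedBall z δ ⊆ D)
    {ε d e : ℝ} (he : ∀ w ∈ sphere z δ, hxPhi ε (ρ w) ≤ hxPhi ε (ρ z) + d * (ρ w - ρ z) + e) :
    Real.circleAverage (D.indicator fun w => hxPhi ε (ρ w)) z δ ≤
      hxPhi ε (ρ z) + d * (Real.circleAverage ρ z δ - ρ z) + e := by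
  have hs : sphere z δ ⊆ D := sphere_subset_closedBall.trans hz
  have hcm : ∀ θ, circleMap z δ θ ∈ sphere z δ := circleMap_mem_sphere z hδ.le
  have hρi : CircleIntegrable ρ z δ := hx_ci_of_bdd hρm fun θ => hρB _ (hs (hcm θ))
  obtain ⟨M, hM⟩ := (isCompact_Icc (a := -B) (b := B)).exists_bound_of_continuousOn
    (hxPhi_cont ε).continuousOn
  have hPi : CircleIntegrable (fun w => hxPhi ε (ρ w)) z δ :=
    hx_ci_of_bdd ((hxPhi_cont ε).measurable.comp hρm)
      fun θ => hM _ (abs_le.1 (hρB _ (hs (hcm θ))))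
  have h1 : Real.circleAverage (D.indicator fun w => hxPhi ε (ρ w)) z δ =
      Real.circleAverage (fun w => hxPhi ε (ρ w)) z δ := by
    apply Real.circleAverage_congr_sphere
    intro w hw
    rw [abs_of_pos hδ] at hw
    simp [hs hw]
  rw [h1]
  have hRi : CircleIntegrable (fun w => d • ρ w + (hxPhi ε (ρ z) - d * ρ z + e)) z δ :=
    (CircleIntegrable.const_smul hρi).add (circleIntegrable_const _ _ _)
  calc _ ≤ Real.circleAverage (fun w => d • ρ w + (hxPhi ε (ρ z) - d * ρ z + e)) z δ := by
        apply Real.circleAverage_mono hPi hRi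
        intro w hw
        rw [abs_of_pos hδ] at hw
        have := he w hw
        simp only [smul_eq_mul]
        linarith
    _ = d * Real.circleAverage ρ z δ + (hxPhi ε (ρ z) - d * ρ z + e) := by
        have e1 := Real.circleAverage_add (c := z) (R := δ)
          (f₁ := fun w => d • ρ w) (f₂ := fun _ => hxPhi ε (ρ z) - d * ρ z + e)
          (CircleIntegrable.const_smul hρi) (circleIntegrable_const _ _ _)
        have e2 : Real.circleAverage (fun w => d • ρ w) z δ = d * Real.circleAverage ρ z δ := by
          exact Real.circleAverage_smul (a := d) (f := ρ)
        rw [Real.circleAverage_const, e2] at e1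
        exact e1
    _ = _ := by ring

lemma hx_key {D : Set ℂ} (hD : IsOpen D) {ρ : ℂ → ℝ} (hρm : Measurable ρ) {B : ℝ}
    (hρB : ∀ z ∈ D, |ρ z| ≤ B)
    (hsm : ∀ z ∈ D, ∀ r > 0, closedBall z r ⊆ D → ρ z ≤ Real.circleAverage ρ z r)
    {K₀ : Set ℂ} {κ L : ℝ} (hκ : 0 < κ) (hL : 0 < L)
    (hLip : ∀ z ∈ D, z ∉ K₀ → ∀ w ∈ D, dist w z < κ → |ρ w - ρ z| ≤ L * dist w z)
    {ε : ℝ} (hε : 0 < ε) (hKε : ∃ K, IsCompact K ∧ K ⊆ D ∧ ∀ z ∈ D, z ∉ K → -ε < ρ z)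
    (hK0 : ∀ z ∈ K₀, ρ z < -3 * ε)
    {a : ℂ} {s s' c q₀ : ℝ} (hss : s < s') (has : closedBall a s' ⊆ D) (hc : 0 < c)
    (hq : ∀ z ∈ closedBall a s', ρ z = c * ‖z‖ ^ 2 - q₀)
    (hqε : ∀ z ∈ closedBall a s', ρ z < -3 * ε)
    {v : ℂ → ℝ} (hv : HxSub D v) (hnn : ∀ z ∈ D, 0 ≤ v z) :
    ENNReal.ofReal c * ∫⁻ z in ball a s, ENNReal.ofReal (v z) ≤
      ENNReal.ofReal (L ^ 2 / (2 * ε)) *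
        ∫⁻ z in {z | z ∈ D ∧ -3 * ε ≤ ρ z}, ENNReal.ofReal (v z) := by
  classical
  obtain ⟨K₁, hK₁, hK₁D, hK₁ρ⟩ := hKε
  set K := K₁ ∪ closedBall a s with hKdef
  have hK : IsCompact K := hK₁.union (isCompact_closedBall a s)
  have hKD : K ⊆ D := union_subset hK₁D ((closedBall_subset_closedBall hss.le).trans has)
  obtain ⟨η, hη, hηD⟩ := hK.exists_cthickening_subset_open hD hKD
  obtain ⟨δ, hδ, hδη, hδκ, hδL, hδs⟩ : ∃ δ > 0, 2 * δ ≤ η ∧ δ < κ ∧ L * δ < ε ∧ δ < s' - s := by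
    have hs0 : 0 < s' - s := sub_pos.2 hss
    refine ⟨min (min (η / 2) (κ / 2)) (min (ε / (2 * L)) ((s' - s) / 2)), by positivity, ?_, ?_,
      ?_, ?_⟩
    · have := (min_le_left (min (η / 2) (κ / 2)) (min (ε / (2 * L)) ((s' - s) / 2))).trans
        (min_le_left _ _)
      linarith
    · have := (min_le_left (min (η / 2) (κ / 2)) (min (ε / (2 * L)) ((s' - s) / 2))).trans
        (min_le_right _ _)
      linarith
    · have := (min_le_right (min (η / 2) (κ / 2)) (min (ε / (2 * L)) ((s' - s) / 2))).trans
        (min_le_left _ _)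
      calc _ ≤ L * (ε / (2 * L)) := mul_le_mul_of_nonneg_left this hL.le
        _ = ε / 2 := by field_simp
        _ < ε := half_lt_self hε
    · have := (min_le_right (min (η / 2) (κ / 2)) (min (ε / (2 * L)) ((s' - s) / 2))).trans
        (min_le_right _ _)
      linarith
  set K2 := cthickening δ K with hK2
  have hK2c : IsCompact K2 := hK.cthickening
  have hballD : ∀ z ∈ K2, closedBall z δ ⊆ D := by
    intro z hz
    refine (closedBall_subset_cthickening hz δ).trans ?_
    refine (cthickening_cthickening_subset hδ.le hδ.le K).trans ?_
    exact (cthickening_mono (by linarith) K).trans hηD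
  have hK2D : K2 ⊆ D := fun z hz => hballD z hz (mem_closedBall_self hδ.le)
  have hKK2 : K ⊆ K2 := self_subset_cthickening K
  set vt : ℂ → ℝ := K2.piecewise v (fun _ => 0) with hvt
  have hvtm : Measurable vt :=
    (hv.1.mono hK2D).measurable_piecewise continuousOn_const hK2c.isClosed.measurableSet
  have hvt_in : ∀ z ∈ K2, vt z = v z := fun z hz => piecewise_eq_of_mem _ _ _ hz
  have hvt_out : ∀ z, z ∉ K2 → vt z = 0 := fun z hz => piecewise_eq_of_notMem _ _ _ hz
  set ph : ℂ → ℝ := D.indicator fun w => hxPhi ε (ρ w) with hph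
  have hphm : Measurable ph :=
    ((hxPhi_cont ε).measurable.comp hρm).indicator hD.measurableSet
  have hph0 : ∀ z, 0 ≤ ph z := fun z => indicator_nonneg (fun w _ => hxPhi_nonneg hε _) z
  have hphK : ∀ z, z ∉ K → ph z = 0 := by
    intro z hz
    by_cases hzD : z ∈ D
    · rw [hph, indicator_of_mem hzD]
      exact hxPhi_zero hε (hK₁ρ z hzD fun h => hz (Or.inl h)).le
    · exact indicator_of_notMem hzD _
  have hphD : ∀ z ∈ D, ph z = hxPhi ε (ρ z) := fun z hz => indicator_of_mem hz _
  obtain ⟨M, hM⟩ := (isCompact_Icc (a := -B) (b := B)).exists_bound_of_continuousOn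
    (hxPhi_cont ε).continuousOn
  have hphM : ∀ z, |ph z| ≤ |M| := by
    intro z
    by_cases hzD : z ∈ D
    · rw [hphD z hzD]
      exact (hM _ (abs_le.1 (hρB z hzD))).trans (le_abs_self M)
    · rw [hph, indicator_of_notMem hzD]
      simp
  set V : ℂ → ENNReal := fun z => ENNReal.ofReal (vt z) with hV
  set P : ℂ → ENNReal := fun z => ENNReal.ofReal (ph z) with hP
  have hVm : Measurable V := hvtm.ennreal_ofReal
  have hPm : Measurable P := hphm.ennreal_ofReal
  have hpi : 0 < 2 * Real.pi := by positivity
  -- lower bound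
  have hA : ∫⁻ z, P z * (ENNReal.ofReal (2 * Real.pi) * V z) ≤
      ∫⁻ z, P z * ∫⁻ θ in Ioc 0 (2 * Real.pi), V (circleMap z (-δ) θ) := by
    apply lintegral_mono
    intro z
    by_cases hz : z ∈ K
    · refine mul_le_mul_right ?_ _
      have hsph : ∀ θ, circleMap z (-δ) θ ∈ closedBall z δ := by
        intro θ
        simp [mem_closedBall, dist_eq_norm, abs_of_pos hδ]
      have hin : ∀ θ, circleMap z (-δ) θ ∈ K2 := fun θ =>
        closedBall_subset_cthickening hz δ (hsph θ)
      have e1 : ∀ θ, V (circleMap z (-δ) θ) = ENNReal.ofReal (v (circleMap z (-δ) θ)) := by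
        intro θ
        rw [hV]
        simp only
        rw [hvt_in _ (hin θ)]
      simp_rw [e1]
      have hci : CircleIntegrable v z (-δ) := by
        unfold CircleIntegrable
        apply Continuous.intervalIntegrable
        exact hv.1.comp_continuous (continuous_circleMap z _) fun θ => hK2D (hin θ)
      rw [hx_lavg hci fun θ => hnn _ (hK2D (hin θ)), Real.circleAverage_neg_radius,
        ENNReal.ofReal_mul hpi.le]
      refine mul_le_mul_right ?_ _
      apply ENNReal.ofReal_le_ofReal
      rw [hvt_in z (hKK2 hz)]
      exact hv.submean hδ (hballD z (hKK2 hz))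
    · simp [hP, hphK z hz]
  -- pointwise estimate
  set S : Set ℂ := {z | z ∈ D ∧ -3 * ε ≤ ρ z} with hS
  have hSm : MeasurableSet S := hD.measurableSet.inter (hρm measurableSet_Ici)
  have hpt : ∀ z ∈ K2, Real.circleAverage ph z δ + (ball a s).indicator (fun _ => c * δ ^ 2) z ≤
      ph z + S.indicator (fun _ => L ^ 2 / (2 * ε) * δ ^ 2) z := by
    intro z hz
    have hzD := hK2D hz
    have hzb := hballD z hz
    have hsD : sphere z δ ⊆ D := sphere_subset_closedBall.trans hzb
    have hsub := hsm z hzD δ hδ hzb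
    rw [hphD z hzD]
    by_cases hzS : -3 * ε ≤ ρ z
    · have hzK0 : z ∉ K₀ := fun h => absurd (hK0 z h) (not_lt.2 hzS)
      have hzb' : z ∉ ball a s := fun h => absurd
        (hqε z (ball_subset_closedBall (ball_subset_ball hss.le h))) (not_lt.2 hzS)
      rw [indicator_of_notMem hzb', indicator_of_mem (show z ∈ S from ⟨hzD, hzS⟩)]
      have := hx_point hρm hρB hδ hzb (ε := ε) (d := hxDPhi ε (ρ z))
        (e := L ^ 2 / (2 * ε) * δ ^ 2) (by
          intro w hw
          have h1 := hLip z hzD hzK0 w (hsD hw) (by rw [mem_sphere.1 hw]; exact hδκ)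
          rw [mem_sphere.1 hw] at h1
          have h2 : (ρ w - ρ z) ^ 2 ≤ (L * δ) ^ 2 := sq_le_sq' (abs_le.1 h1).1 (abs_le.1 h1).2
          have h3 := hxPhi_quad hε (ρ w) (ρ z)
          have h4 : (ρ w - ρ z) ^ 2 / (2 * ε) ≤ L ^ 2 / (2 * ε) * δ ^ 2 := by
            rw [div_mul_eq_mul_div, ← mul_pow]
            gcongr
          linarith)
      have h5 := mul_nonpos_of_nonpos_of_nonneg (hxDPhi_nonpos hε (ρ z)) (sub_nonneg.2 hsub)
      linarith
    · push Not at hzS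
      have hzS' : z ∉ S := fun h => absurd h.2 (not_le.2 hzS)
      rw [indicator_of_notMem hzS']
      have := hx_point hρm hρB hδ hzb (ε := ε) (d := -1) (e := 0) (by
          intro w hw
          have h2 : ρ w ≤ -2 * ε := by
            by_cases hwK : w ∈ K₀
            · have := hK0 w hwK; linarith
            · have h1 := hLip w (hsD hw) hwK z hzD (by
                rw [dist_comm, mem_sphere.1 hw]; exact hδκ)
              rw [dist_comm, mem_sphere.1 hw] at h1
              have := (abs_le.1 h1).1
              linarith
          rw [hxPhi_low hε h2, hxPhi_low hε (by linarith)]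
          linarith)
      by_cases hzb' : z ∈ ball a s
      · rw [indicator_of_mem hzb']
        have hcb : closedBall z δ ⊆ closedBall a s' := by
          apply closedBall_subset_closedBall'
          have := mem_ball.1 hzb'
          linarith
        have hav : Real.circleAverage ρ z δ = c * (‖z‖ ^ 2 + δ ^ 2) - q₀ := by
          have e1 : Real.circleAverage ρ z δ =
              Real.circleAverage (fun w => c • ‖w‖ ^ 2 - q₀) z δ := by
            apply Real.circleAverage_congr_sphere
            intro w hw
            rw [abs_of_pos hδ] at hw
            exact hq w (hcb (sphere_subset_closedBall hw))
          have hi : CircleIntegrable (fun w : ℂ => c • ‖w‖ ^ 2) z δ :=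
            (by fun_prop : Continuous fun w : ℂ => c • ‖w‖ ^ 2).continuousOn.circleIntegrable hδ.le
          rw [e1, Real.circleAverage_fun_sub hi (circleIntegrable_const _ _ _),
            Real.circleAverage_const, Real.circleAverage_fun_smul, hx_circleAverage_normSq z hδ,
            smul_eq_mul]
        have hz1 := hq z (hcb (mem_closedBall_self hδ.le))
        rw [hav] at this
        rw [hz1] at this ⊢
        linarith
      · rw [indicator_of_notMem hzb']
        linarith
  have hb_m : MeasurableSet (ball a s) := measurableSet_ball
  have hci_ph : ∀ z, CircleIntegrable ph z δ := fun z => hx_ci_of_bdd hphm fun θ => hphM _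
  set α := ENNReal.ofReal (c * δ ^ 2) with hα
  set β := ENNReal.ofReal (L ^ 2 / (2 * ε) * δ ^ 2) with hβ
  set τ := ENNReal.ofReal (2 * Real.pi) with hτ
  have hpt2 : ∀ z, V z * (∫⁻ θ in Ioc 0 (2 * Real.pi), P (circleMap z δ θ)) +
      τ * α * (ball a s).indicator V z ≤ P z * (τ * V z) + τ * β * S.indicator V z := by
    intro z
    by_cases hz : z ∈ K2
    · have h0 := hpt z hz
      have h1 : (∫⁻ θ in Ioc 0 (2 * Real.pi), P (circleMap z δ θ)) =
          τ * ENNReal.ofReal (Real.circleAverage ph z δ) := by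
        rw [hx_lavg (hci_ph z) fun θ => hph0 _, ENNReal.ofReal_mul hpi.le]
      have hav0 : 0 ≤ Real.circleAverage ph z δ :=
        Real.circleAverage_nonneg_of_nonneg fun x _ => hph0 x
      have h2 : ENNReal.ofReal (Real.circleAverage ph z δ) +
          (ball a s).indicator (fun _ => α) z ≤ P z + S.indicator (fun _ => β) z := by
        have e1 : (ball a s).indicator (fun _ => α) z =
            ENNReal.ofReal ((ball a s).indicator (fun _ => c * δ ^ 2) z) := by
          by_cases h : z ∈ ball a s
          · rw [indicator_of_mem h, indicator_of_mem h]
          · rw [indicator_of_notMem h, indicator_of_notMem h, ENNReal.ofReal_zero]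
        have e2 : S.indicator (fun _ => β) z =
            ENNReal.ofReal (S.indicator (fun _ => L ^ 2 / (2 * ε) * δ ^ 2) z) := by
          by_cases h : z ∈ S
          · rw [indicator_of_mem h, indicator_of_mem h]
          · rw [indicator_of_notMem h, indicator_of_notMem h, ENNReal.ofReal_zero]
        rw [e1, e2, ← ENNReal.ofReal_add hav0 (indicator_nonneg (fun _ _ => by positivity) z),
          ← ENNReal.ofReal_add (hph0 z) (indicator_nonneg (fun _ _ => by positivity) z)]
        exact ENNReal.ofReal_le_ofReal h0
      have h3 : ∀ (T : Set ℂ) (γ : ENNReal), τ * γ * T.indicator V z =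
          τ * V z * T.indicator (fun _ => γ) z := by
        intro T γ
        by_cases h : z ∈ T
        · rw [indicator_of_mem h, indicator_of_mem h]; ring
        · rw [indicator_of_notMem h, indicator_of_notMem h]; simp
      rw [h3, h3, h1]
      calc _ = τ * V z * (ENNReal.ofReal (Real.circleAverage ph z δ) +
          (ball a s).indicator (fun _ => α) z) := by ring
        _ ≤ τ * V z * (P z + S.indicator (fun _ => β) z) := mul_le_mul_right h2 _
        _ = _ := by ring
    · have hV0 : V z = 0 := by simp [hV, hvt_out z hz]
      have h3 : ∀ (T : Set ℂ), T.indicator V z = 0 := by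
        intro T
        by_cases h : z ∈ T
        · rw [indicator_of_mem h, hV0]
        · rw [indicator_of_notMem h]
      rw [h3, h3, hV0]
      simp
  have hintg := lintegral_mono (μ := (volume : Measure ℂ)) hpt2
  have hPVm : Measurable fun z => P z * (τ * V z) := hPm.mul (hVm.const_mul _)
  rw [lintegral_add_right _ ((hVm.indicator hb_m).const_mul _), lintegral_add_left hPVm,
    lintegral_const_mul _ (hVm.indicator hb_m), lintegral_const_mul _ (hVm.indicator hSm),
    lintegral_indicator hb_m, lintegral_indicator hSm, hx_tonelli hVm hPm δ] at hintg
  have hfin : ∫⁻ z, P z * (τ * V z) ≠ ⊤ := by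
    obtain ⟨N, hN⟩ := hK2c.exists_bound_of_continuousOn (hv.1.mono hK2D)
    have : ∀ z, P z * (τ * V z) ≤
        K2.indicator (fun _ => ENNReal.ofReal |M| * (τ * ENNReal.ofReal N)) z := by
      intro z
      by_cases hz : z ∈ K2
      · rw [indicator_of_mem hz]
        refine mul_le_mul' (ENNReal.ofReal_le_ofReal ((le_abs_self _).trans (hphM z))) ?_
        refine mul_le_mul_right (ENNReal.ofReal_le_ofReal ?_) _
        rw [hvt_in z hz]
        exact (le_abs_self _).trans (hN z hz)
      · simp [hV, hvt_out z hz]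
    refine ne_top_of_le_ne_top ?_ (lintegral_mono this)
    rw [lintegral_indicator hK2c.isClosed.measurableSet, setLIntegral_const]
    exact ENNReal.mul_ne_top (ENNReal.mul_ne_top ENNReal.ofReal_ne_top
      (ENNReal.mul_ne_top ENNReal.ofReal_ne_top ENNReal.ofReal_ne_top)) hK2c.measure_lt_top.ne
  have hintg2 := (add_le_add_left hA (τ * α * ∫⁻ z in ball a s, V z)).trans hintg
  have hint3 := (ENNReal.add_le_add_iff_left hfin).1 hintg2
  have hτ0 : τ ≠ 0 := by simpa [hτ] using Real.pi_pos
  have hd0 : ENNReal.ofReal (δ ^ 2) ≠ 0 :=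
    (ENNReal.ofReal_pos.2 (by positivity)).ne'
  rw [hα, hβ, ENNReal.ofReal_mul hc.le, ENNReal.ofReal_mul (by positivity)] at hint3
  have hint4 : (τ * ENNReal.ofReal (δ ^ 2)) * (ENNReal.ofReal c * ∫⁻ z in ball a s, V z) ≤
      (τ * ENNReal.ofReal (δ ^ 2)) * (ENNReal.ofReal (L ^ 2 / (2 * ε)) * ∫⁻ z in S, V z) := by
    calc _ = _ := by ring
      _ ≤ _ := hint3
      _ = _ := by ring
  have hint5 := (ENNReal.mul_le_mul_iff_right (mul_ne_zero hτ0 hd0)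
    (ENNReal.mul_ne_top ENNReal.ofReal_ne_top ENNReal.ofReal_ne_top)).1 hint4
  have hl : ∫⁻ z in ball a s, V z = ∫⁻ z in ball a s, ENNReal.ofReal (v z) := by
    apply setLIntegral_congr_fun hb_m
    intro z hz
    simp only [hV]
    rw [hvt_in z (hKK2 (Or.inr (ball_subset_closedBall hz)))]
  have hr : ∫⁻ z in S, V z ≤ ∫⁻ z in S, ENNReal.ofReal (v z) := by
    apply lintegral_mono
    intro z
    apply ENNReal.ofReal_le_ofReal_iff'.2
    by_cases hz : z ∈ K2
    · exact Or.inl (hvt_in z hz).le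
    · exact Or.inr (hvt_out z hz).le
  rw [hl] at hint5
  exact hint5.trans (mul_le_mul_right hr _)

/-! ### The truncated exhaustion function -/

/-- Maximum of an extended real function with a real function, as a real function. -/
noncomputable def hxRho (ψ : ℂ → EReal) (q : ℂ → ℝ) (z : ℂ) : ℝ :=
  (max (ψ z) ((q z : ℝ) : EReal)).toReal

lemma hxRho_coe {ψ : ℂ → EReal} {q : ℂ → ℝ} {z : ℂ} (h : ψ z ≠ ⊤) :
    ((hxRho ψ q z : ℝ) : EReal) = max (ψ z) ((q z : ℝ) : EReal) := by
  unfold hxRho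
  apply EReal.coe_toReal
  · rcases max_choice (ψ z) ((q z : ℝ) : EReal) with h1 | h1 <;> rw [h1]
    · exact h
    · exact EReal.coe_ne_top _
  · exact ne_of_gt (lt_of_lt_of_le (EReal.bot_lt_coe (q z)) (le_max_right _ _))

lemma hxRho_meas {ψ : ℂ → EReal} (hψ : Measurable ψ) {q : ℂ → ℝ} (hq : Measurable q) :
    Measurable (hxRho ψ q) :=
  (hψ.max (measurable_coe_real_ereal.comp hq)).ereal_toReal

lemma hxRho_ge {ψ : ℂ → EReal} {q : ℂ → ℝ} {z : ℂ} (h : ψ z ≠ ⊤) : q z ≤ hxRho ψ q z := by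
  rw [← EReal.coe_le_coe_iff, hxRho_coe h]
  exact le_max_right _ _

lemma hxRho_le {ψ : ℂ → EReal} {q : ℂ → ℝ} {z : ℂ} {t : ℝ} (h : ψ z ≤ (t : EReal))
    (hq : q z ≤ t) : hxRho ψ q z ≤ t := by
  rw [← EReal.coe_le_coe_iff, hxRho_coe (ne_top_of_le_ne_top (EReal.coe_ne_top t) h)]
  exact max_le h (EReal.coe_le_coe_iff.2 hq)

lemma hx_cE_le (ψ : ℂ → EReal) (z : ℂ) (r : ℝ) (n : ℕ) :
    circleAvgE ψ z r ≤ ((Real.circleAverage (hxRho ψ fun _ => -(n : ℝ)) z r : ℝ) : EReal) :=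
  iInf_le _ n

lemma hx_neg {D : Set ℂ} (hDo : IsOpen D) (hDc : IsConnected D) (hDb : Bornology.IsBounded D)
    {z₀ : ℂ} (hz₀ : z₀ ∈ D) {ψ : ℂ → EReal} (hψmeas : Measurable ψ) (hψsh : SubharmonicOnE ψ D)
    (hψbd : ∀ z ∈ frontier D, ψ z = 0) (hψlel : 0 < lelongNumber ψ z₀)
    {U : Set ℂ} (hU : IsOpen U) (hUbd : frontier D ⊆ U) {ψC1 : ℂ → ℝ}
    (hψC1 : ContinuousOn ψC1 U)
    (hψeq : ∀ z ∈ U ∩ closure D, ψ z = ((ψC1 z : ℝ) : EReal)) :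
    ∀ z ∈ D, ψ z < 0 := by
  obtain ⟨husc, htop, -, hsub⟩ := hψsh
  have hcl : ∀ z, z ∈ closure D → z ∈ D ∨ z ∈ frontier D := by
    intro z hz
    by_cases h : z ∈ D
    · exact Or.inl h
    · exact Or.inr ⟨hz, by rwa [hDo.interior_eq]⟩
  have husc2 : UpperSemicontinuousOn ψ (closure D) := by
    intro z hz y hy
    rcases hcl z hz with h | h
    · have := husc z h y hy
      rw [hDo.nhdsWithin_eq h] at this
      exact mem_nhdsWithin_of_mem_nhds this
    · have hzU := hUbd h
      rw [hψeq z ⟨hzU, hz⟩] at hy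
      have h1 : ∀ᶠ x in nhds z, ((ψC1 x : ℝ) : EReal) < y := by
        have : ContinuousAt (fun x => ((ψC1 x : ℝ) : EReal)) z :=
          continuous_coe_real_ereal.continuousAt.comp (hψC1.continuousAt (hU.mem_nhds hzU))
        exact this.eventually_lt_const hy
      filter_upwards [mem_nhdsWithin_of_mem_nhds h1, mem_nhdsWithin_of_mem_nhds (hU.mem_nhds hzU),
        self_mem_nhdsWithin] with x h2 h3 h4
      rw [hψeq x ⟨h3, h4⟩]
      exact h2
  by_contra! hcon
  obtain ⟨y, hy, hy0⟩ := hcon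
  obtain ⟨x₁, hx₁, hmax₁⟩ := husc2.exists_isMaxOn ⟨y, subset_closure hy⟩ hDb.isCompact_closure
  obtain ⟨x, hx, hmax⟩ : ∃ x ∈ D, ∀ w ∈ D, ψ w ≤ ψ x := by
    rcases hcl x₁ hx₁ with h | h
    · exact ⟨x₁, h, fun w hw => hmax₁ (subset_closure hw)⟩
    · refine ⟨y, hy, fun w hw => ?_⟩
      have := hmax₁ (subset_closure hw)
      rw [mem_ofPred_eq, hψbd x₁ h] at this
      exact this.trans hy0
  have hx0 : 0 ≤ ψ x := hy0.trans (hmax y hy)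
  obtain ⟨m, hm⟩ : ∃ m : ℝ, ψ x = (m : EReal) := by
    refine ⟨(ψ x).toReal, (EReal.coe_toReal (htop x hx) ?_).symm⟩
    intro h
    rw [h] at hx0
    exact absurd hx0 (by simp)
  have hm0 : 0 ≤ m := by
    rw [hm] at hx0
    exact_mod_cast hx0
  rw [hm] at hmax
  have hvopen : IsOpen {z | z ∈ D ∧ ψ z < (m : EReal)} := by
    rw [isOpen_iff_mem_nhds]
    rintro z ⟨hz, hzm⟩
    have := husc z hz _ hzm
    rw [hDo.nhdsWithin_eq hz] at this
    filter_upwards [this, hDo.mem_nhds hz] with w h1 h2 using ⟨h2, h1⟩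
  have huopen : IsOpen {z | z ∈ D ∧ ψ z = (m : EReal)} := by
    rw [Metric.isOpen_iff]
    rintro z ⟨hz, hzm⟩
    obtain ⟨r₁, hr₁, hball⟩ := hx_small_radius hDo hz
    refine ⟨r₁, hr₁, fun w hw => ?_⟩
    by_cases hwz : w = z
    · rw [hwz]; exact ⟨hz, hzm⟩
    set r := dist w z with hr
    have hr0 : 0 < r := dist_pos.2 hwz
    have hcb := hball r hw
    have hwD : w ∈ D := hcb (mem_closedBall.2 le_rfl)
    refine ⟨hwD, ?_⟩
    by_contra hne
    have hlt : ψ w < (m : EReal) := lt_of_le_of_ne (hmax w hwD) hne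
    have hwc : w ∈ circleMap z r '' Ioc 0 (2 * Real.pi) := by
      rw [image_circleMap_Ioc, abs_of_pos hr0]
      exact hr.symm
    obtain ⟨θ₀, hθ₀, hθw⟩ := hwc
    have hcD : ∀ θ, circleMap z r θ ∈ D := fun θ =>
      hcb (sphere_subset_closedBall (circleMap_mem_sphere z hr0.le θ))
    set g := hxRho ψ (fun _ => -((1 : ℕ) : ℝ)) with hg
    have hgm : Measurable g := hxRho_meas hψmeas measurable_const
    have hgle : ∀ θ, g (circleMap z r θ) ≤ m := fun θ =>
      hxRho_le (hmax _ (hcD θ)) (by push_cast; linarith)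
    have hgge : ∀ θ, -1 ≤ g (circleMap z r θ) := fun θ => by
      have := hxRho_ge (q := fun _ => -((1 : ℕ) : ℝ)) (htop _ (hcD θ))
      simpa [hg] using this
    have hgi : CircleIntegrable g z r := hx_ci_of_bdd (B := m + 1) hgm fun θ => by
      rw [abs_le]
      constructor
      · linarith [hgge θ]
      · linarith [hgle θ]
    have hgi' : IntegrableOn (fun θ => g (circleMap z r θ)) (Ioc 0 (2 * Real.pi)) := by
      have := hgi
      unfold CircleIntegrable at this
      rwa [intervalIntegrable_iff_integrableOn_Ioc_of_le (by positivity)] at this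
    have h1 : m ≤ Real.circleAverage g z r := by
      have := (hsub z hz r hr0 hcb).trans (hx_cE_le ψ z r 1)
      rw [hzm] at this
      exact EReal.coe_le_coe_iff.1 this
    have hpi : 0 < 2 * Real.pi := by positivity
    have h2 : ∫ θ in Ioc 0 (2 * Real.pi), (m - g (circleMap z r θ)) ≤ 0 := by
      rw [integral_sub (integrable_const m) hgi', setIntegral_const]
      rw [Real.circleAverage, intervalIntegral.integral_of_le hpi.le, smul_eq_mul,
        ← div_eq_inv_mul, le_div_iff₀ hpi] at h1
      simp only [measureReal_def, Real.volume_Ioc, sub_zero, ENNReal.toReal_ofReal hpi.le,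
        smul_eq_mul]
      linarith
    have h3 : ∫ θ in Ioc 0 (2 * Real.pi), (m - g (circleMap z r θ)) = 0 :=
      le_antisymm h2 (integral_nonneg fun θ => sub_nonneg.2 (hgle θ))
    rw [integral_eq_zero_iff_of_nonneg (fun θ => sub_nonneg.2 (hgle θ))
      ((integrable_const m).sub hgi')] at h3
    have h4 : ∀ᵐ θ ∂((volume : Measure ℝ).restrict (Ioc 0 (2 * Real.pi))),
        ¬ (ψ (circleMap z r θ) < (m : EReal)) := by
      filter_upwards [h3] with θ hθ hlt'
      have e1 : g (circleMap z r θ) = m := by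
        have : m - g (circleMap z r θ) = 0 := hθ
        linarith
      have e2 : ((g (circleMap z r θ) : ℝ) : EReal) < (m : EReal) := by
        rw [hg, hxRho_coe (htop _ (hcD θ))]
        refine max_lt hlt' (EReal.coe_lt_coe_iff.2 ?_)
        push_cast
        linarith
      rw [e1] at e2
      exact lt_irrefl _ e2
    rw [ae_restrict_iff' measurableSet_Ioc] at h4
    set N : Set ℝ := {θ | ψ (circleMap z r θ) < (m : EReal)} ∩ Ioo 0 (2 * Real.pi) with hN
    have hNo' : IsOpen {θ | ψ (circleMap z r θ) < (m : EReal)} := by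
      have := hvopen.preimage (continuous_circleMap z r)
      convert! this using 1
      ext θ
      simp [hcD θ]
    have hNo : IsOpen N := hNo'.inter isOpen_Ioo
    have hNne : N.Nonempty := by
      have hcl2 : θ₀ ∈ closure (Ioo 0 (2 * Real.pi)) := by
        rw [closure_Ioo hpi.ne]
        exact Ioc_subset_Icc_self hθ₀
      exact mem_closure_iff.1 hcl2 _ hNo' (by rw [← hθw] at hlt; exact hlt)
    have hNpos := hNo.measure_pos (volume : Measure ℝ) hNne
    have hN0 : (volume : Measure ℝ) N = 0 := by
      refine measure_mono_null ?_ (ae_iff.1 h4)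
      rintro θ ⟨h5, h6⟩ h7
      exact h7 (Ioo_subset_Ioc_self h6) h5
    exact hNpos.ne' hN0
  have hall : D ⊆ {z | z ∈ D ∧ ψ z = (m : EReal)} := by
    refine hDc.isPreconnected.subset_left_of_subset_union huopen hvopen ?_ ?_ ⟨x, hx, hx, hm⟩
    · rw [disjoint_left]
      rintro z ⟨_, h1⟩ ⟨_, h2⟩
      exact h2.ne h1
    · intro z hz
      rcases (hmax z hz).lt_or_eq with h | h
      · exact Or.inr ⟨hz, h⟩
      · exact Or.inl ⟨hz, h⟩
  -- contradiction with the Lelong number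
  unfold lelongNumber at hψlel
  have hne : ({a : ℝ | 0 ≤ a ∧ ∃ C : ℝ, ∃ r > 0, ∀ z : ℂ, z ≠ z₀ → dist z z₀ < r →
      ψ z ≤ ((a * Real.log (dist z z₀) + C : ℝ) : EReal)}).Nonempty := by
    rw [nonempty_iff_ne_empty]
    intro h
    rw [h, Real.sSup_empty] at hψlel
    exact lt_irrefl _ hψlel
  obtain ⟨a, ⟨-, C, r, hr, hlog⟩, ha⟩ := exists_lt_of_lt_csSup hne hψlel
  obtain ⟨r', hr', hb'⟩ := Metric.isOpen_iff.1 hDo z₀ hz₀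
  have hev : ∀ᶠ t in nhdsWithin (0 : ℝ) (Ioi 0), a * Real.log t + C < m := by
    have h1 : Tendsto (fun t => a * Real.log t + C) (nhdsWithin (0 : ℝ) (Ioi 0)) atBot :=
      tendsto_atBot_add_const_right _ _ (Real.tendsto_log_nhdsGT_zero.const_mul_atBot ha)
    exact h1.eventually_lt_atBot m
  have hev2 : ∀ᶠ t in nhdsWithin (0 : ℝ) (Ioi 0), t < min r r' :=
    mem_nhdsWithin_of_mem_nhds (Iio_mem_nhds (lt_min hr hr'))
  obtain ⟨t, ⟨ht1, ht2⟩, ht3⟩ := ((hev.and hev2).and self_mem_nhdsWithin).exists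
  have ht0 : (0 : ℝ) < t := ht3
  have hd : dist (z₀ + (t : ℂ)) z₀ = t := by
    simp [dist_eq_norm, abs_of_pos ht0]
  have h1 := hlog (z₀ + t) (by simpa using ht0.ne') (by rw [hd]; exact ht2.trans_le (min_le_left _ _))
  have h2 := (hall (hb' (mem_ball.2 (by rw [hd]; exact ht2.trans_le (min_le_right _ _)) :
    z₀ + (t : ℂ) ∈ ball z₀ r'))).2
  rw [h2, hd, EReal.coe_le_coe_iff] at h1
  linarith

/-- The properties of the exhaustion function used in the final argument. -/
structure HxGeom (D : Set ℂ) (ψ : ℂ → EReal) (a : ℂ) (s' : ℝ) (ρ : ℂ → ℝ)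
    (B κ L c q₀ c' : ℝ) (K₀ : Set ℂ) : Prop where
  meas : Measurable ρ
  bdd : ∀ z ∈ D, |ρ z| ≤ B
  submean : ∀ z ∈ D, ∀ r > 0, closedBall z r ⊆ D → ρ z ≤ Real.circleAverage ρ z r
  kpos : 0 < κ
  lpos : 0 < L
  k0c : IsCompact K₀
  k0D : K₀ ⊆ D
  lip : ∀ z ∈ D, z ∉ K₀ → ∀ w ∈ D, dist w z < κ → |ρ w - ρ z| ≤ L * dist w z
  exh : ∀ ε > 0, ∃ K, IsCompact K ∧ K ⊆ D ∧ ∀ z ∈ D, z ∉ K → -ε < ρ z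
  neg : ∀ K, IsCompact K → K ⊆ D → ∃ m > 0, ∀ z ∈ K, ρ z ≤ -m
  cpos : 0 < c
  quad : ∀ z ∈ closedBall a s', ρ z = c * ‖z‖ ^ 2 - q₀
  c'pos : 0 < c'
  eqpsi : ∀ z ∈ D, -c' < ρ z → ((ρ z : ℝ) : EReal) = ψ z

lemma hx_usc_neg {D : Set ℂ} {ψ : ℂ → EReal} (husc : UpperSemicontinuousOn ψ D)
    (hneg : ∀ z ∈ D, ψ z < 0) {K : Set ℂ} (hK : IsCompact K) (hKD : K ⊆ D) :
    ∃ m : ℝ, 0 < m ∧ ∀ z ∈ K, ψ z < ((-m : ℝ) : EReal) := by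
  rcases K.eq_empty_or_nonempty with h | h
  · exact ⟨1, one_pos, fun z hz => by simp [h] at hz⟩
  · obtain ⟨x, hx, hmax⟩ := (UpperSemicontinuousOn.mono husc hKD).exists_isMaxOn h hK
    obtain ⟨t, ht1, ht2⟩ := EReal.lt_iff_exists_real_btwn.1 (hneg x (hKD hx))
    refine ⟨-t, ?_, fun z hz => ?_⟩
    · have : t < 0 := by exact_mod_cast ht2
      linarith
    · rw [neg_neg]
      exact lt_of_le_of_lt (hmax hz) ht1

lemma hx_geom {D : Set ℂ} (hDo : IsOpen D) (hDb : Bornology.IsBounded D)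
    {ψ : ℂ → EReal} (hψmeas : Measurable ψ) (hψsh : SubharmonicOnE ψ D)
    (hneg : ∀ z ∈ D, ψ z < 0)
    (hψbd : ∀ z ∈ frontier D, ψ z = 0)
    {U : Set ℂ} (hU : IsOpen U) (hUbd : frontier D ⊆ U) {ψC1 : ℂ → ℝ}
    (hψC1 : ContDiffOn ℝ 1 ψC1 U)
    (hψeq : ∀ z ∈ U ∩ closure D, ψ z = ((ψC1 z : ℝ) : EReal))
    {a : ℂ} {s' : ℝ} (has : closedBall a s' ⊆ D) :
    ∃ ρ B κ L c q₀ c' K₀, HxGeom D ψ a s' ρ B κ L c q₀ c' K₀ := by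
  obtain ⟨husc, htop, -, hsub⟩ := hψsh
  obtain ⟨m, hm, hψm⟩ := hx_usc_neg husc hneg (isCompact_closedBall a s') has
  obtain ⟨R₀, hR₀, hDR⟩ : ∃ R₀ > 0, ∀ z ∈ D, ‖z‖ ≤ R₀ := by
    obtain ⟨R, hR, h⟩ := hDb.exists_pos_norm_le
    exact ⟨R, hR, h⟩
  set R := R₀ + 1 with hR
  have hRpos : 0 < R := by linarith
  set c := m / (2 * R ^ 2) with hc
  have hcpos : 0 < c := by positivity
  set q₀ := c * R ^ 2 with hq₀
  have hq₀m : q₀ = m / 2 := by rw [hq₀, hc]; field_simp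
  have hq₀pos : 0 < q₀ := by positivity
  set c' := c * (R ^ 2 - R₀ ^ 2) with hc'
  have hc'pos : 0 < c' := mul_pos hcpos (by rw [hR]; nlinarith)
  set q : ℂ → ℝ := fun z => c * ‖z‖ ^ 2 - q₀ with hq
  have hqm : Measurable q := by rw [hq]; fun_prop
  have hq1 : ∀ z ∈ D, q z ≤ -c' := by
    intro z hz
    have h1 : ‖z‖ ^ 2 ≤ R₀ ^ 2 := by
      have := hDR z hz
      gcongr
    have h2 := mul_le_mul_of_nonneg_left h1 hcpos.le
    simp only [hq, hq₀, hc']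
    linarith
  have hq2 : ∀ z, -q₀ ≤ q z := by
    intro z
    have : 0 ≤ c * ‖z‖ ^ 2 := by positivity
    simp only [hq]
    linarith
  set ρ := hxRho ψ q with hρ
  have hρm : Measurable ρ := hxRho_meas hψmeas hqm
  have hρcoe : ∀ z ∈ D, ((ρ z : ℝ) : EReal) = max (ψ z) ((q z : ℝ) : EReal) := fun z hz =>
    hxRho_coe (htop z hz)
  have hρq : ∀ z ∈ D, q z ≤ ρ z := fun z hz => hxRho_ge (htop z hz)
  have hρ0 : ∀ z ∈ D, ρ z ≤ 0 := fun z hz =>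
    hxRho_le (by simpa using (hneg z hz).le) (by linarith [hq1 z hz])
  have hbdd : ∀ z ∈ D, |ρ z| ≤ q₀ := by
    intro z hz
    rw [abs_le]
    constructor
    · exact (hq2 z).trans (hρq z hz)
    · linarith [hρ0 z hz]
  have heqpsi : ∀ z ∈ D, -c' < ρ z → ((ρ z : ℝ) : EReal) = ψ z := by
    intro z hz hlt
    rw [hρcoe z hz]
    rcases max_choice (ψ z) ((q z : ℝ) : EReal) with h | h
    · exact h
    · exfalso
      have h1 := hρcoe z hz
      rw [h, EReal.coe_eq_coe_iff] at h1
      have := hq1 z hz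
      linarith
  set W : Set ℂ := {z | z ∈ U ∧ -c' < ψC1 z} with hW
  have hWε : ∀ ε : ℝ, IsOpen {z | z ∈ U ∧ -ε < ψC1 z} := fun ε =>
    hψC1.continuousOn.isOpen_inter_preimage hU isOpen_Ioi
  have hfrC : ∀ z ∈ frontier D, ψC1 z = 0 := by
    intro z hz
    have h1 := hψeq z ⟨hUbd hz, hz.1⟩
    rw [hψbd z hz] at h1
    exact_mod_cast h1.symm
  have hfrW : ∀ ε > 0, frontier D ⊆ {z | z ∈ U ∧ -ε < ψC1 z} := by
    intro ε hε z hz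
    refine ⟨hUbd hz, ?_⟩
    rw [hfrC z hz]
    linarith
  have hρW : ∀ z ∈ D, z ∈ W → ρ z = ψC1 z := by
    intro z hz hzW
    have h1 := hρcoe z hz
    rw [hψeq z ⟨hzW.1, subset_closure hz⟩, max_eq_left] at h1
    · exact EReal.coe_eq_coe_iff.1 h1
    · exact EReal.coe_le_coe_iff.2 ((hq1 z hz).trans hzW.2.le)
  have hcl : ∀ z, z ∈ closure D → z ∉ frontier D → z ∈ D := by
    intro z hz hn
    by_contra h
    exact hn ⟨hz, by rwa [hDo.interior_eq]⟩
  have hclc : IsCompact (closure D) := hDb.isCompact_closure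
  have hfrc : IsCompact (frontier D) := hclc.of_isClosed_subset isClosed_frontier
    frontier_subset_closure
  obtain ⟨η, hη, hηW⟩ := hfrc.exists_cthickening_subset_open (hWε c') (hfrW c' hc'pos)
  have hcomp : IsCompact (cthickening η (frontier D)) := hfrc.cthickening
  have hηU : cthickening η (frontier D) ⊆ U := fun z hz => (hηW hz).1
  obtain ⟨C, hC⟩ := hcomp.exists_bound_of_continuousOn
    ((hψC1.continuousOn_fderiv_of_isOpen hU le_rfl).mono hηU)
  set κ := η / 2 with hκ
  have hκpos : 0 < κ := half_pos hη
  refine ⟨ρ, q₀, κ, max C 1, c, q₀, c', closure D \ thickening κ (frontier D), ?_⟩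
  refine ⟨hρm, hbdd, ?_, hκpos, lt_max_of_lt_right one_pos, hclc.diff isOpen_thickening, ?_, ?_,
    ?_, ?_, hcpos, ?_, hc'pos, heqpsi⟩
  · -- submean
    intro z hz r hr hcb
    have hcD : ∀ θ, circleMap z r θ ∈ D := fun θ =>
      hcb (sphere_subset_closedBall (circleMap_mem_sphere z hr.le θ))
    have hsD : sphere z r ⊆ D := sphere_subset_closedBall.trans hcb
    have hρi : CircleIntegrable ρ z r := hx_ci_of_bdd hρm fun θ => hbdd _ (hcD θ)
    rcases max_choice (ψ z) ((q z : ℝ) : EReal) with h | h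
    · obtain ⟨n, hn⟩ := exists_nat_ge q₀
      have h1 := (hsub z hz r hr hcb).trans (hx_cE_le ψ z r n)
      rw [← h, ← hρcoe z hz, EReal.coe_le_coe_iff] at h1
      refine h1.trans (Real.circleAverage_mono ?_ hρi ?_)
      · refine hx_ci_of_bdd (B := n) (hxRho_meas hψmeas measurable_const) fun θ => ?_
        rw [abs_le]
        constructor
        · exact hxRho_ge (q := fun _ => -(n : ℝ)) (htop _ (hcD θ))
        · have : hxRho ψ (fun _ => -(n : ℝ)) (circleMap z r θ) ≤ 0 :=
            hxRho_le (by simpa using (hneg _ (hcD θ)).le) (by simp)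
          exact this.trans (Nat.cast_nonneg n)
      · intro w hw
        rw [abs_of_pos hr] at hw
        have hwD := hsD hw
        apply hxRho_le
        · rw [hρcoe w hwD]; exact le_max_left _ _
        · have := hq2 w
          have := hρq w hwD
          linarith
    · have h1 := hρcoe z hz
      rw [h, EReal.coe_eq_coe_iff] at h1
      have hi : CircleIntegrable (fun w : ℂ => c • ‖w‖ ^ 2) z r :=
        (by fun_prop : Continuous fun w : ℂ => c • ‖w‖ ^ 2).continuousOn.circleIntegrable hr.le
      have hav : Real.circleAverage q z r = c * (‖z‖ ^ 2 + r ^ 2) - q₀ := by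
        change Real.circleAverage (fun w => c • ‖w‖ ^ 2 - q₀) z r = _
        rw [Real.circleAverage_fun_sub hi (circleIntegrable_const _ _ _),
          Real.circleAverage_const, Real.circleAverage_fun_smul, hx_circleAverage_normSq z hr,
          smul_eq_mul]
      have hqi : CircleIntegrable q z r := hi.sub (circleIntegrable_const q₀ z r)
      have h2 : Real.circleAverage q z r ≤ Real.circleAverage ρ z r := by
        apply Real.circleAverage_mono hqi hρi
        intro w hw
        rw [abs_of_pos hr] at hw
        exact hρq w (hsD hw)
      have h3 : 0 ≤ c * r ^ 2 := by positivity
      rw [h1]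
      simp only [hq] at hav h2 ⊢
      linarith
  · rintro z ⟨h1, h2⟩
    exact hcl z h1 fun h => h2 (self_subset_thickening hκpos _ h)
  · intro z hz hzK w hw hdist
    have hzt : z ∈ thickening κ (frontier D) := by
      by_contra h
      exact hzK ⟨subset_closure hz, h⟩
    obtain ⟨x, hx, hxz⟩ := mem_thickening_iff.1 hzt
    have hzb : z ∈ ball x η := by
      rw [mem_ball]
      linarith
    have hwb : w ∈ ball x η := by
      rw [mem_ball]
      have := dist_triangle w z x
      linarith
    have hbs : ball x η ⊆ cthickening η (frontier D) :=
      ball_subset_closedBall.trans (closedBall_subset_cthickening hx η)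
    rw [hρW z hz (hηW (hbs hzb)), hρW w hw (hηW (hbs hwb))]
    have := (convex_ball x η).norm_image_sub_le_of_norm_fderiv_le (𝕜 := ℝ) (f := ψC1) (C := C)
      (fun y hy => (hψC1.differentiableOn one_ne_zero).differentiableAt
        (hU.mem_nhds (hηU (hbs hy))))
      (fun y hy => hC y (hbs hy)) hzb hwb
    rw [Real.norm_eq_abs, ← dist_eq_norm] at this
    exact this.trans (mul_le_mul_of_nonneg_right (le_max_left _ _) dist_nonneg)
  · intro ε hε
    have hε' : 0 < min ε c' := lt_min hε hc'pos
    refine ⟨closure D \ {z | z ∈ U ∧ -(min ε c') < ψC1 z}, hclc.diff (hWε _), ?_, ?_⟩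
    · rintro z ⟨h1, h2⟩
      exact hcl z h1 fun h => h2 (hfrW _ hε' h)
    · intro z hz hzK
      have h1 : z ∈ {z | z ∈ U ∧ -(min ε c') < ψC1 z} := by
        by_contra h
        exact hzK ⟨subset_closure hz, h⟩
      have h2 := h1.2
      have h3 := min_le_left ε c'
      have h4 := min_le_right ε c'
      rw [hρW z hz ⟨h1.1, by linarith⟩]
      linarith
  · intro K hK hKD
    obtain ⟨m', hm', h⟩ := hx_usc_neg husc hneg hK hKD
    refine ⟨min m' c', lt_min hm' hc'pos, fun z hz => ?_⟩
    have h3 := min_le_left m' c'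
    have h4 := min_le_right m' c'
    refine hxRho_le ((h z hz).le.trans (EReal.coe_le_coe_iff.2 (by linarith))) ?_
    have := hq1 z (hKD hz)
    linarith
  · intro z hz
    have h1 := hρcoe z (has hz)
    rw [max_eq_right, EReal.coe_eq_coe_iff] at h1
    · exact h1
    · refine (hψm z hz).le.trans (EReal.coe_le_coe_iff.2 ?_)
      have := hq2 z
      linarith

/-! ### Final assembly -/

lemma hx_normSq_sub {D : Set ℂ} (hD : IsOpen D) {f : ℂ → ℂ} (hf : DifferentiableOn ℂ f D) :
    HxSub D (fun z => ‖f z‖ ^ 2) := by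
  have hc : ContinuousOn (fun z => ‖f z‖ ^ 2) D := hf.continuousOn.norm.pow 2
  refine ⟨hc, fun z hz => ?_⟩
  obtain ⟨r₁, hr₁, h1⟩ := hx_small_radius hD hz
  refine ⟨r₁, hr₁, fun r hr hr1 => ?_⟩
  have hcb := h1 r hr1
  have hs : sphere z r ⊆ D := sphere_subset_closedBall.trans hcb
  set b : ℂ := (starRingEnd ℂ) (f z) ^ 2 with hb
  have hF : DifferentiableOn ℂ (fun w => b * f w ^ 2) D := (hf.pow 2).const_mul b
  have hmean := hx_holo_re_mean (h := fun w => (b * f w ^ 2).re) hF (fun w _ => rfl) hr hcb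
  have hbz : (b * f z ^ 2).re = ‖f z‖ ^ 2 * ‖f z‖ ^ 2 := by
    have : b * f z ^ 2 = ((‖f z‖ ^ 2 * ‖f z‖ ^ 2 : ℝ) : ℂ) := by
      rw [hb, ← mul_pow, ← Complex.normSq_eq_conj_mul_self, Complex.normSq_eq_norm_sq]
      push_cast
      ring
    rw [this, Complex.ofReal_re]
  have hnb : ‖b‖ = ‖f z‖ ^ 2 := by
    rw [hb, norm_pow, RCLike.norm_conj]
  have hle : Real.circleAverage (fun w => (b * f w ^ 2).re) z r ≤
      Real.circleAverage (fun w => ‖f z‖ ^ 2 • ‖f w‖ ^ 2) z r := by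
    apply Real.circleAverage_mono
    · exact hx_circleIntegrable_of_cont (Complex.continuous_re.comp_continuousOn hF.continuousOn)
        hr.le hs
    · have h2 : ContinuousOn (fun w => ‖f z‖ ^ 2 • ‖f w‖ ^ 2) D :=
        (continuousOn_const (c := ‖f z‖ ^ 2)).fun_smul hc
      exact hx_circleIntegrable_of_cont h2 hr.le hs
    · intro w _
      calc (b * f w ^ 2).re ≤ ‖b * f w ^ 2‖ := Complex.re_le_norm _
        _ = _ := by rw [norm_mul, hnb, norm_pow, smul_eq_mul]
  rw [hmean, Real.circleAverage_fun_smul, smul_eq_mul, hbz] at hle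
  change ‖f z‖ ^ 2 ≤ _
  rcases (sq_nonneg ‖f z‖).eq_or_lt with h0 | h0
  · rw [← h0]
    exact Real.circleAverage_nonneg_of_nonneg fun x _ => by positivity
  · exact le_of_mul_le_mul_left hle h0

lemma hx_bound {D : Set ℂ} (hD : IsOpen D) {ψ : ℂ → EReal} {a : ℂ} {s s' : ℝ} (hss : s < s')
    (has : closedBall a s' ⊆ D)
    {ρ : ℂ → ℝ} {B κ L c q₀ c' : ℝ} {K₀ : Set ℂ} (hg : HxGeom D ψ a s' ρ B κ L c q₀ c' K₀)
    {u : ℂ → ℝ} {Λ : ENNReal}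
    (hΛ : Filter.liminf
        (fun r : ℝ =>
          (∫⁻ z in {z | z ∈ D ∧ ((Real.log r : ℝ) : EReal) ≤ ψ z},
              ENNReal.ofReal (u z)) / ENNReal.ofReal (1 - r))
        (nhdsWithin 1 (Set.Iio (1:ℝ))) = Λ)
    {v : ℂ → ℝ} (hv : HxSub D v) (hnn : ∀ z ∈ D, 0 ≤ v z) {K : Set ℂ} (hK : IsCompact K)
    (hKD : K ⊆ D) (hvu : ∀ z ∈ D, z ∉ K → v z = u z) :
    ∫⁻ z in ball a s, ENNReal.ofReal (v z) ≤
      ENNReal.ofReal (3 * L ^ 2 / 2) * Λ / ENNReal.ofReal c := by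
  obtain ⟨m₀, hm₀, h₀⟩ := hg.neg K₀ hg.k0c hg.k0D
  obtain ⟨m₁, hm₁, h₁⟩ := hg.neg _ (isCompact_closedBall a s') has
  obtain ⟨m₂, hm₂, h₂⟩ := hg.neg K hK hKD
  set μ := min (min m₀ m₁) (min m₂ c') with hμ
  have hμpos : 0 < μ := lt_min (lt_min hm₀ hm₁) (lt_min hm₂ hg.c'pos)
  have hμ0 : μ ≤ m₀ := (min_le_left _ _).trans (min_le_left _ _)
  have hμ1 : μ ≤ m₁ := (min_le_left _ _).trans (min_le_right _ _)
  have hμ2 : μ ≤ m₂ := (min_le_right _ _).trans (min_le_left _ _)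
  have hμ3 : μ ≤ c' := (min_le_right _ _).trans (min_le_right _ _)
  set X := ∫⁻ z in ball a s, ENNReal.ofReal (v z) with hX
  set A := ENNReal.ofReal (3 * L ^ 2 / 2) with hA
  have hL := hg.lpos
  have hA0 : A ≠ 0 := (ENNReal.ofReal_pos.2 (by positivity)).ne'
  have hAt : A ≠ ⊤ := ENNReal.ofReal_ne_top
  have hc0 : ENNReal.ofReal c ≠ 0 := (ENNReal.ofReal_pos.2 hg.cpos).ne'
  have hlog : ∀ᶠ r in nhdsWithin (1 : ℝ) (Iio 1), -μ < Real.log r := by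
    apply mem_nhdsWithin_of_mem_nhds
    have : ContinuousAt Real.log 1 := Real.continuousAt_log one_ne_zero
    exact this.eventually_const_lt (by simpa using hμpos)
  have hpos : ∀ᶠ r in nhdsWithin (1 : ℝ) (Iio 1), 0 < r :=
    mem_nhdsWithin_of_mem_nhds (Ioi_mem_nhds one_pos)
  have hev : ∀ᶠ r in nhdsWithin (1 : ℝ) (Iio 1), ENNReal.ofReal c * X / A ≤
      (∫⁻ z in {z | z ∈ D ∧ ((Real.log r : ℝ) : EReal) ≤ ψ z},
              ENNReal.ofReal (u z)) / ENNReal.ofReal (1 - r) := by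
    filter_upwards [hlog, hpos, self_mem_nhdsWithin] with r hr1 hr0 hr2
    have hr2' : r < 1 := hr2
    have hlneg : Real.log r < 0 := Real.log_neg hr0 hr2'
    set ε := -Real.log r / 3 with hε
    have hεpos : 0 < ε := by rw [hε]; linarith
    have h3ε : -3 * ε = Real.log r := by rw [hε]; ring
    have hkey := hx_key hD hg.meas hg.bdd hg.submean hg.kpos hg.lpos hg.lip hεpos
      (hg.exh ε hεpos) (K₀ := K₀)
      (fun z hz => by rw [h3ε]; linarith [h₀ z hz]) hss has hg.cpos hg.quad
      (fun z hz => by rw [h3ε]; linarith [h₁ z hz]) hv hnn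
    rw [h3ε] at hkey
    have hI : ∫⁻ z in {z | z ∈ D ∧ Real.log r ≤ ρ z}, ENNReal.ofReal (v z) ≤
        ∫⁻ z in {z | z ∈ D ∧ ((Real.log r : ℝ) : EReal) ≤ ψ z}, ENNReal.ofReal (u z) := by
      have hm : MeasurableSet {z | z ∈ D ∧ Real.log r ≤ ρ z} :=
        hD.measurableSet.inter (hg.meas measurableSet_Ici)
      calc _ = ∫⁻ z in {z | z ∈ D ∧ Real.log r ≤ ρ z}, ENNReal.ofReal (u z) := by
            apply setLIntegral_congr_fun hm
            rintro z ⟨hz, hzr⟩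
            simp only
            rw [hvu z hz]
            intro hzK
            linarith [h₂ z hzK]
        _ ≤ _ := by
            apply lintegral_mono_set
            rintro z ⟨hz, hzr⟩
            refine ⟨hz, ?_⟩
            rw [← hg.eqpsi z hz (by linarith)]
            exact EReal.coe_le_coe_iff.2 hzr
    have hLe : ENNReal.ofReal (L ^ 2 / (2 * ε)) ≤ A / ENNReal.ofReal (1 - r) := by
      rw [hA, ← ENNReal.ofReal_div_of_pos (by linarith)]
      apply ENNReal.ofReal_le_ofReal
      have h1 : 1 - r ≤ 3 * ε := by
        have := Real.log_le_sub_one_of_pos hr0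
        rw [hε]
        linarith
      have h1r : 0 < 1 - r := by linarith
      rw [div_le_div_iff₀ (by positivity) h1r]
      have := mul_le_mul_of_nonneg_left h1 (sq_nonneg L)
      linarith
    rw [ENNReal.div_le_iff_le_mul (Or.inl hA0) (Or.inl hAt)]
    calc _ ≤ _ := hkey
      _ ≤ A / ENNReal.ofReal (1 - r) *
          ∫⁻ z in {z | z ∈ D ∧ ((Real.log r : ℝ) : EReal) ≤ ψ z}, ENNReal.ofReal (u z) :=
          mul_le_mul' hLe hI
      _ = _ := by
          rw [div_eq_mul_inv, div_eq_mul_inv]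
          ring
  have hlim : ENNReal.ofReal c * X / A ≤ Λ := by
    rw [← hΛ]
    exact le_liminf_of_le (by isBoundedDefault) hev
  rw [ENNReal.div_le_iff_le_mul (Or.inl hA0) (Or.inl hAt)] at hlim
  rw [ENNReal.le_div_iff_mul_le (Or.inl hc0) (Or.inl ENNReal.ofReal_ne_top), mul_comm X, mul_comm A]
  exact hlim

/-- a sufficient condition for membership in the Hardy class `H₂^(c)(D)`:
if `liminf_{r→1⁻} (∫_{{ψ ≥ log r}} |f|²) / (1-r) < ∞` then `f ∈ H₂^(c)(D)`. -/
theorem hardy_class_of_liminf_finite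
    (n : ℕ) (D : Set ℂ) (hD : IsRegularRegion n D)
    (z₀ : ℂ) (hz₀ : z₀ ∈ D)
    (G : ℂ → EReal) (hG : IsGreenFunction D z₀ G)
    (ν : ℂ → ℂ) (hν : IsOutwardUnitNormal D ν)
    (ψ : ℂ → EReal)
    (hψmeas : Measurable ψ) (hψsh : SubharmonicOnE ψ D)
    (hψbd : ∀ z ∈ frontier D, ψ z = 0)
    (hψlel : 0 < lelongNumber ψ z₀)
    (U : Set ℂ) (hU : IsOpen U) (hUbd : frontier D ⊆ U)
    (ψC1 : ℂ → ℝ) (hψC1 : ContDiffOn ℝ 1 ψC1 U)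
    (hψeq : ∀ z ∈ U ∩ closure D, ψ z = ((ψC1 z : ℝ) : EReal))
    (hνpos : ∀ z ∈ frontier D, 0 < fderiv ℝ ψC1 z (ν z))
    (f : ℂ → ℂ) (hf : DifferentiableOn ℂ f D)
    (hliminf : Filter.liminf
        (fun r : ℝ =>
          (∫⁻ z in {z | z ∈ D ∧ ((Real.log r : ℝ) : EReal) ≤ ψ z},
              ENNReal.ofReal (‖f z‖ ^ 2)) / ENNReal.ofReal (1 - r))
        (nhdsWithin 1 (Set.Iio (1:ℝ))) < ⊤) :
    HardyH2c D f := by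
  obtain ⟨hDo, hDc, hDb, -⟩ := hD
  have hneg : ∀ z ∈ D, ψ z < 0 := hx_neg hDo hDc hDb hz₀ hψmeas hψsh hψbd hψlel hU hUbd
    hψC1.continuousOn hψeq
  refine ⟨hf, ?_⟩
  set u : ℂ → ℝ := fun z => ‖f z‖ ^ 2 with hu
  set Fam : Set (ℂ → ℝ) := {v | HxSub D v ∧ (∀ z ∈ D, u z ≤ v z) ∧
    ∃ K, IsCompact K ∧ K ⊆ D ∧ ∀ z ∈ D, z ∉ K → v z = u z} with hFam
  refine hx_perron hDo (u := u) Fam ?_ (fun v hv => hv.1) ?_ ?_ ?_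
  · exact ⟨hx_normSq_sub hDo hf, fun z _ => le_rfl, ∅, isCompact_empty, empty_subset _,
      fun z _ _ => rfl⟩
  · rintro v ⟨hv1, hv2, K, hK, hKD, hKv⟩ w ⟨hw1, hw2, K', hK', hKD', hKw⟩
    refine ⟨hv1.max hDo hw1, fun z hz => (hv2 z hz).trans (le_max_left _ _), K ∪ K', hK.union hK',
      union_subset hKD hKD', fun z hz hzK => ?_⟩
    simp only
    rw [hKv z hz fun h => hzK (Or.inl h), hKw z hz fun h => hzK (Or.inr h), max_self]
  · rintro v ⟨hv1, hv2, K, hK, hKD, hKv⟩ c R hR hc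
    refine ⟨hv1.mod hDo hR hc, fun z hz => (hv2 z hz).trans (hv1.le_mod hR hc z),
      K ∪ closedBall c R, hK.union (isCompact_closedBall c R), union_subset hKD hc,
      fun z hz hzK => ?_⟩
    rw [hxMod_out fun h => hzK (Or.inr (ball_subset_closedBall h))]
    exact hKv z hz fun h => hzK (Or.inl h)
  · intro c R hR hc
    obtain ⟨η, hη, hηD⟩ := (isCompact_closedBall c R).exists_cthickening_subset_open hDo hc
    rw [cthickening_closedBall hη.le hR.le] at hηD
    obtain ⟨ρ, B, κ, L, c₁, q₀, c', K₀, hg⟩ :=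
      hx_geom hDo hDb hψmeas hψsh hneg hψbd hU hUbd hψC1 hψeq hηD
    set Bd := ENNReal.ofReal (3 * L ^ 2 / 2) * (Filter.liminf
        (fun r : ℝ =>
          (∫⁻ z in {z | z ∈ D ∧ ((Real.log r : ℝ) : EReal) ≤ ψ z},
              ENNReal.ofReal (u z)) / ENNReal.ofReal (1 - r))
        (nhdsWithin 1 (Set.Iio (1:ℝ)))) / ENNReal.ofReal c₁ with hBd
    have hBdt : Bd ≠ ⊤ := by
      apply ENNReal.div_ne_top
      · exact ENNReal.mul_ne_top ENNReal.ofReal_ne_top hliminf.ne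
      · exact (ENNReal.ofReal_pos.2 hg.cpos).ne'
    set k := η / 2 / 2 * (2 * Real.pi) * (η / 2 / 2) with hk
    have hkpos : 0 < k := by positivity
    refine ⟨Bd.toReal / k, ?_⟩
    rintro v ⟨hv1, hv2, K, hK, hKD, hKv⟩ z hz
    have hnn : ∀ z ∈ D, 0 ≤ v z := fun z hz =>
      (by positivity : (0 : ℝ) ≤ u z).trans (hv2 z hz)
    have h1 := hx_bound hDo (s := η / 2 + R) (by linarith) hηD hg rfl hv1 hnn hK hKD hKv
    have hz' := mem_closedBall.1 hz
    have h2 : closedBall z (η / 2) ⊆ D :=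
      (closedBall_subset_closedBall' (by linarith)).trans hηD
    have h3 := hv1.area hnn (half_pos hη) h2
    have h4 : ball z (η / 2) ⊆ ball c (η / 2 + R) := ball_subset_ball' (by linarith)
    have h5 := (h3.trans (lintegral_mono_set h4)).trans h1
    have hvz := hnn z (hc hz)
    rw [← ENNReal.ofReal_mul (by positivity), ENNReal.ofReal_le_iff_le_toReal hBdt] at h5
    rw [le_div_iff₀ hkpos]
    refine le_of_eq_of_le ?_ h5
    rw [hk]
    ring
end
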